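/- arXiv:1903.03747 — 5 statements merged into one kernel-verified Lean document; each statement's English description precedes it below -/
import Mathlib

section
/- For real numbers X, Y with |X| < 1 and −1 < Y < 0, the generating series of height-one multiple T-values satisfies ∑_{m≥1, n≥1} T(1,...,1,m+1) X^m Y^{n−1} (with n−1 ones before m+1) = 2 ∫_0^1 t^{−X} (1−t)^{−Y−1} (1+t)^{Y−1} dt + 1/Y. -/
/-- The multiple T-value `T(k₁, …, k_r)`:
`2^r` times the sum over `0 < m₁ < ⋯ < m_r` with `m_i ≡ i (mod 2)`
of `1 / (m₁^{k₁} ⋯ m_r^{k_r})`. -/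
noncomputable def MTV (k : List ℕ) : ℝ :=
  2 ^ k.length *
    ∑' f : {f : Fin k.length → ℕ // StrictMono f ∧ ∀ i, f i % 2 = ((i : ℕ) + 1) % 2},
      ∏ i : Fin k.length, (1 : ℝ) / (f.1 i : ℝ) ^ k.get i

open MeasureTheory

/-- Coefficient of `t^N` in `log((1+t)/(1-t))^n / n!`. -/
noncomputable def cT : ℕ → ℕ → ℝ
  | 0, N => if N = 0 then 1 else 0
  | n + 1, N => if N % 2 = (n + 1) % 2 then (2 / (N : ℝ)) * ∑ M ∈ Finset.range N, cT n M else 0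

lemma cT_nonneg (n N : ℕ) : 0 ≤ cT n N := by
  induction n generalizing N with
  | zero => simp only [cT]; split_ifs <;> norm_num
  | succ n ih =>
    simp only [cT]
    split_ifs
    · exact mul_nonneg (by positivity) (Finset.sum_nonneg fun M _ => ih M)
    · exact le_rfl

lemma cT_parity (n N : ℕ) (h : N % 2 ≠ n % 2) : cT n N = 0 := by
  cases n with
  | zero =>
    simp only [cT]; rw [if_neg]; rintro rfl; exact h rfl
  | succ n => simp only [cT]; rw [if_neg h]

lemma cT_zero_of_lt (n N : ℕ) (h : N < n) : cT n N = 0 := by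
  induction n generalizing N with
  | zero => omega
  | succ n ih =>
    simp only [cT]
    split_ifs
    · rw [Finset.sum_eq_zero, mul_zero]
      intro M hM
      rw [Finset.mem_range] at hM
      exact ih M (by omega)
    · rfl

lemma cT_rec (n K : ℕ) :
    ((K : ℝ) + 2) * cT (n + 1) (K + 2) = K * cT (n + 1) K + 2 * cT n (K + 1) := by
  by_cases h : K % 2 = (n + 1) % 2
  · have h2 : (K + 2) % 2 = (n + 1) % 2 := by omega
    have h0 : cT n K = 0 := cT_parity n K (by omega)
    simp only [cT]
    rw [if_pos h, if_pos h2, Finset.sum_range_succ, Finset.sum_range_succ, h0]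
    rcases Nat.eq_zero_or_pos K with rfl | hK
    · simp
    · have : (K : ℝ) ≠ 0 := by positivity
      have : (K : ℝ) + 2 ≠ 0 := by positivity
      push_cast
      field_simp
      ring
  · rw [cT_parity (n + 1) (K + 2) (by omega), cT_parity (n + 1) K h,
      cT_parity n (K + 1) (by omega)]
    ring

lemma cT_one (n : ℕ) : cT (n + 1) 1 = 2 * cT n 0 := by
  by_cases h : 1 % 2 = (n + 1) % 2
  · simp only [cT]
    rw [if_pos h]; simp
  · rw [cT_parity (n + 1) 1 h, cT_parity n 0 (by omega)]; ring

/-- tuples -/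
abbrev Tup (n : ℕ) : Type :=
  {f : Fin n → ℕ // StrictMono f ∧ ∀ i, f i % 2 = ((i : ℕ) + 1) % 2}

lemma sup_last {n : ℕ} (f : Fin (n + 1) → ℕ) (hf : StrictMono f) :
    Finset.univ.sup f = f (Fin.last n) := by
  apply le_antisymm
  · exact Finset.sup_le fun i _ => hf.monotone (Fin.le_last i)
  · exact Finset.le_sup (f := f) (Finset.mem_univ _)

/-- splitting off the last entry -/
noncomputable def tupEquiv (n : ℕ) :
    (Σ f : Tup n, {N : ℕ // Finset.univ.sup f.1 < N ∧ N % 2 = (n + 1) % 2}) ≃ Tup (n + 1) where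
  toFun x := ⟨Fin.snoc (α := fun _ => ℕ) x.1.1 x.2.1, by
    obtain ⟨⟨f, hf, hp⟩, N, hN, hN2⟩ := x
    constructor
    · intro i j hij
      induction j using Fin.lastCases with
      | last =>
        induction i using Fin.lastCases with
        | last => exact absurd hij (lt_irrefl _)
        | cast i =>
          simp only [Fin.snoc_castSucc, Fin.snoc_last]
          exact lt_of_le_of_lt (Finset.le_sup (f := f) (Finset.mem_univ i)) hN
      | cast j =>
        induction i using Fin.lastCases with
        | last => exact absurd hij (not_lt.2 (Fin.le_last _))
        | cast i =>
          simp only [Fin.snoc_castSucc]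
          exact hf (by simpa using hij)
    · intro i
      induction i using Fin.lastCases with
      | last => simpa using hN2
      | cast i => simpa using hp i⟩
  invFun g := ⟨⟨fun i => g.1 i.castSucc, by
      constructor
      · intro i j hij
        exact g.2.1 (by simpa using hij)
      · intro i
        simpa using g.2.2 i.castSucc⟩, ⟨g.1 (Fin.last n), by
      have h := g.2.2 (Fin.last n)
      simp only [Fin.val_last] at h
      refine ⟨?_, h⟩
      rw [Finset.sup_lt_iff]
      · intro i _
        exact g.2.1 (Fin.castSucc_lt_last i)
      · rw [Nat.bot_eq_zero]
        rcases Nat.eq_zero_or_pos n with hn | hn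
        · subst hn
          omega
        · exact lt_of_le_of_lt (Nat.zero_le _)
            (g.2.1 (Fin.castSucc_lt_last (⟨0, hn⟩ : Fin n)))⟩⟩
  left_inv x := by
    obtain ⟨⟨f, hf, hp⟩, N, hN, hN2⟩ := x
    have : (fun i : Fin n => Fin.snoc (α := fun _ => ℕ) f N i.castSucc) = f := by
      funext i; simp
    refine Sigma.ext (Subtype.ext this) ?_
    refine (Subtype.heq_iff_coe_eq ?_).2 ?_
    · intro M
      simp only [this]
    · simp
  right_inv g := by
    apply Subtype.ext
    funext i
    induction i using Fin.lastCases with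
    | last => simp
    | cast i => simp

open scoped ENNReal in
lemma tup_sum (n : ℕ) (h : ℕ → ℝ≥0∞) :
    ∑' f : Tup n, (∏ i, ENNReal.ofReal (2 / (f.1 i : ℝ))) * h (Finset.univ.sup f.1)
      = ∑' N, ENNReal.ofReal (cT n N) * h N := by
  induction n generalizing h with
  | zero =>
    rw [tsum_eq_single (⟨Fin.elim0, fun i => i.elim0, fun i => i.elim0⟩ : Tup 0),
      tsum_eq_single 0]
    · simp [cT]
    · intro b hb; simp [cT, hb]
    · intro b hb
      exact absurd (Subtype.ext (funext fun i => i.elim0)) hb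
  | succ n ih =>
    rw [← (tupEquiv n).tsum_eq, ENNReal.tsum_sigma']
    have key : ∀ f : Tup n,
        ∑' b : {N : ℕ // Finset.univ.sup f.1 < N ∧ N % 2 = (n + 1) % 2},
          (∏ i, ENNReal.ofReal (2 / ((tupEquiv n ⟨f, b⟩).1 i : ℝ))) *
            h (Finset.univ.sup (tupEquiv n ⟨f, b⟩).1)
        = (∏ i, ENNReal.ofReal (2 / (f.1 i : ℝ))) *
          (fun M => ∑' N : ℕ, if M < N ∧ N % 2 = (n + 1) % 2 then
            ENNReal.ofReal (2 / (N : ℝ)) * h N else 0) (Finset.univ.sup f.1) := by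
      intro f
      simp only
      rw [← ENNReal.tsum_mul_left]
      have := tsum_subtype {N : ℕ | Finset.univ.sup f.1 < N ∧ N % 2 = (n + 1) % 2}
        (fun N => (∏ i, ENNReal.ofReal (2 / (f.1 i : ℝ))) * (ENNReal.ofReal (2 / (N : ℝ)) * h N))
      refine Eq.trans (Eq.trans ?_ this) ?_
      · refine tsum_congr fun b => ?_
        rw [sup_last _ (tupEquiv n ⟨f, b⟩).2.1, Fin.prod_univ_castSucc]
        simp [tupEquiv, mul_assoc]
      · refine tsum_congr fun N => ?_
        rw [Set.indicator_apply]
        simp only [Set.mem_ofPred_eq]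
        split_ifs <;> simp
    rw [tsum_congr key, ih (fun M => ∑' N : ℕ, if M < N ∧ N % 2 = (n + 1) % 2 then
            ENNReal.ofReal (2 / (N : ℝ)) * h N else 0)]
    simp_rw [← ENNReal.tsum_mul_left]
    rw [ENNReal.tsum_comm]
    refine tsum_congr fun N => ?_
    by_cases hN : N % 2 = (n + 1) % 2
    · simp only [cT, hN, and_true, if_true]
      rw [tsum_eq_sum (s := Finset.range N)]
      · rw [ENNReal.ofReal_mul (by positivity),
          ENNReal.ofReal_sum_of_nonneg (fun M _ => cT_nonneg n M), Finset.mul_sum, Finset.sum_mul]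
        refine Finset.sum_congr rfl fun M hM => ?_
        rw [if_pos (Finset.mem_range.1 hM)]
        ring
      · intro M hM
        rw [if_neg (by simpa using hM), mul_zero]
    · simp [cT, hN]

lemma MTV_aux (m p : ℕ) (L : ℕ) (hL : L = p + 1) (g : Fin L → ℕ)
    (hg : ∀ i, g i = if (i : ℕ) < p then 1 else m + 2) :
    (2 : ℝ) ^ L * ∑' f : Tup L, ∏ i, (1 : ℝ) / (f.1 i : ℝ) ^ g i
      = ∑' N : ℕ, cT (p + 1) (N + 1) / ((N : ℝ) + 1) ^ (m + 1) := by
  subst hL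
  have hA : ∀ f : Tup (p + 1), (2 : ℝ) ^ (p + 1) * ∏ i, (1 : ℝ) / (f.1 i : ℝ) ^ g i
      = (∏ i, (2 / (f.1 i : ℝ))) * (1 / ((Finset.univ.sup f.1 : ℕ) : ℝ) ^ (m + 1)) := by
    intro f
    rw [sup_last _ f.2.1, Fin.prod_univ_castSucc, Fin.prod_univ_castSucc, hg (Fin.last p)]
    have : ∀ i : Fin p, (1 : ℝ) / (f.1 i.castSucc : ℝ) ^ g i.castSucc
        = (1 / 2) * (2 / (f.1 i.castSucc : ℝ)) := by
      intro i
      rw [hg]; simp; ring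
    rw [Finset.prod_congr rfl fun i _ => this i, Finset.prod_mul_distrib]
    simp only [Finset.prod_const, Finset.card_univ, Fintype.card_fin, Fin.val_last, lt_irrefl,
      if_false]
    have h2 : (2 : ℝ) ^ p * (1 / 2) ^ p = 1 := by rw [← mul_pow]; norm_num
    calc _ = ((2 : ℝ) ^ p * (1 / 2) ^ p) * ((∏ i : Fin p, (2 / (f.1 i.castSucc : ℝ))) *
          (2 * (1 / (f.1 (Fin.last p) : ℝ) ^ (m + 2)))) := by ring
      _ = _ := by rw [h2, one_mul]; field_simp; ring
  rw [← tsum_mul_left, tsum_congr hA]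
  have hT := tup_sum (p + 1) (fun N => ENNReal.ofReal (1 / (N : ℝ) ^ (m + 1)))
  have h0 : cT (p + 1) 0 = 0 := cT_zero_of_lt _ _ (by omega)
  rw [tsum_eq_zero_add' ENNReal.summable, h0] at hT
  simp only [ENNReal.ofReal_zero, zero_mul, zero_add] at hT
  have hT' := congrArg ENNReal.toReal hT
  rw [ENNReal.tsum_toReal_eq, ENNReal.tsum_toReal_eq] at hT'
  · refine Eq.trans (tsum_congr fun f => ?_) (hT'.trans (tsum_congr fun N => ?_))
    · rw [← ENNReal.ofReal_prod_of_nonneg (fun i _ => by positivity),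
        ← ENNReal.ofReal_mul (Finset.prod_nonneg fun i _ => by positivity),
        ENNReal.toReal_ofReal]
      exact mul_nonneg (Finset.prod_nonneg fun i _ => by positivity) (by positivity)
    · rw [← ENNReal.ofReal_mul (cT_nonneg _ _), ENNReal.toReal_ofReal
        (mul_nonneg (cT_nonneg _ _) (by positivity))]
      push_cast
      ring
  · intro N
    exact ENNReal.mul_ne_top ENNReal.ofReal_ne_top ENNReal.ofReal_ne_top
  · intro f
    exact ENNReal.mul_ne_top (ENNReal.prod_ne_top fun i _ => ENNReal.ofReal_ne_top)
      ENNReal.ofReal_ne_top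

lemma MTV_eq (m p : ℕ) : MTV (List.replicate p 1 ++ [m + 2])
      = ∑' N : ℕ, cT (p + 1) (N + 1) / ((N : ℝ) + 1) ^ (m + 1) := by
  refine MTV_aux m p _ (by simp) _ ?_
  intro i
  simp only [List.get_eq_getElem, List.getElem_append, List.length_replicate]
  split_ifs with h
  · simp
  · simp

/-- coefficient of ((1+t)/(1-t))^Y -/
noncomputable def aT (Y : ℝ) (N : ℕ) : ℝ := ∑ n ∈ Finset.range (N + 1), cT n N * Y ^ n

lemma aT_eq (Y : ℝ) (N L : ℕ) (h : N < L) : aT Y N = ∑ n ∈ Finset.range L, cT n N * Y ^ n := by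
  unfold aT
  refine Finset.sum_subset (fun x hx => by simp at hx ⊢; omega) fun n _ hn => ?_
  rw [cT_zero_of_lt _ _ (by simp at hn; omega), zero_mul]

lemma aT_zero (Y : ℝ) : aT Y 0 = 1 := by simp [aT, cT]

lemma aT_one (Y : ℝ) : aT Y 1 = 2 * Y := by
  simp [aT, Finset.sum_range_succ, cT]

lemma aT_rec (Y : ℝ) (K : ℕ) :
    ((K : ℝ) + 2) * aT Y (K + 2) = K * aT Y K + 2 * Y * aT Y (K + 1) := by
  rw [aT_eq Y (K + 2) (K + 3 + 1) (by omega), aT_eq Y K (K + 3 + 1) (by omega),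
    aT_eq Y (K + 1) (K + 3) (by omega), Finset.sum_range_succ', Finset.sum_range_succ' _ (K + 3)]
  have h1 : cT 0 (K + 2) = 0 := by simp [cT]
  have h2 : (K : ℝ) * cT 0 K = 0 := by
    rcases Nat.eq_zero_or_pos K with rfl | h
    · simp
    · simp [cT, h.ne']
  rw [h1, mul_add, mul_add, ← mul_assoc (K : ℝ) (cT 0 K), h2, Finset.mul_sum, Finset.mul_sum,
    Finset.mul_sum]
  simp only [zero_mul, mul_zero, add_zero]
  rw [← Finset.sum_add_distrib]
  refine Finset.sum_congr rfl fun n _ => ?_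
  have := cT_rec n K
  linear_combination Y ^ (n + 1) * this

lemma aT_abs_le (Y : ℝ) (N : ℕ) : |aT Y N| ≤ aT |Y| N := by
  unfold aT
  refine (Finset.abs_sum_le_sum_abs _ _).trans (le_of_eq (Finset.sum_congr rfl fun n _ => ?_))
  rw [abs_mul, abs_pow, abs_of_nonneg (cT_nonneg _ _)]

lemma aT_bound (Y : ℝ) (hY : |Y| ≤ 1) (N : ℕ) : |aT Y N| ≤ 2 := by
  induction N using Nat.strong_induction_on with
  | _ N ih =>
    match N, ih with
    | 0, _ => rw [aT_zero]; norm_num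
    | 1, _ => rw [aT_one, abs_mul]; norm_num; linarith
    | K + 2, ih =>
      have h := aT_rec Y K
      have h1 := ih K (by omega)
      have h2 := ih (K + 1) (by omega)
      have h3 : ((K : ℝ) + 2) * |aT Y (K + 2)| ≤ ((K : ℝ) + 2) * 2 := by
        calc ((K : ℝ) + 2) * |aT Y (K + 2)| = |((K : ℝ) + 2) * aT Y (K + 2)| := by
              rw [abs_mul, abs_of_nonneg (by positivity : (0 : ℝ) ≤ (K : ℝ) + 2)]
          _ = |K * aT Y K + 2 * Y * aT Y (K + 1)| := by rw [h]
          _ ≤ |(K : ℝ) * aT Y K| + |2 * Y * aT Y (K + 1)| := abs_add_le _ _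
          _ = K * |aT Y K| + 2 * (|Y| * |aT Y (K + 1)|) := by
              rw [abs_mul, abs_mul, abs_mul, Nat.abs_cast, abs_two]; ring
          _ ≤ K * 2 + 2 * (1 * 2) := by gcongr
          _ = _ := by ring
      exact le_of_mul_le_mul_left h3 (by positivity)

/-- the generating function -/
noncomputable def gT (Y t : ℝ) : ℝ := (1 + t) ^ Y * (1 - t) ^ (-Y)

lemma gT_deriv (Y t : ℝ) (h1 : -1 < t) (h2 : t < 1) :
    HasDerivAt (gT Y) (2 * Y * ((1 - t) ^ (-Y - 1) * (1 + t) ^ (Y - 1))) t := by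
  have hp : 0 < 1 + t := by linarith
  have hm : 0 < 1 - t := by linarith
  have e1 : HasDerivAt (fun s : ℝ => (1 + s) ^ Y) (1 * Y * (1 + t) ^ (Y - 1)) t :=
    ((hasDerivAt_id t).const_add 1).rpow_const (Or.inl hp.ne')
  have e2 : HasDerivAt (fun s : ℝ => (1 - s) ^ (-Y)) (-1 * (-Y) * (1 - t) ^ (-Y - 1)) t :=
    ((hasDerivAt_id t).const_sub 1).rpow_const (Or.inl hm.ne')
  have := e1.mul e2
  refine HasDerivAt.congr_deriv this ?_
  have q1 : (1 + t) ^ Y = (1 + t) ^ (Y - 1) * (1 + t) := by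
    rw [← Real.rpow_add_one hp.ne']; ring_nf
  have q2 : (1 - t) ^ (-Y) = (1 - t) ^ (-Y - 1) * (1 - t) := by
    rw [← Real.rpow_add_one hm.ne']; ring_nf
  rw [q1, q2]; ring

lemma aT_summable (Y t : ℝ) (hY : |Y| ≤ 1) (ht : |t| < 1) :
    Summable fun N => aT Y N * t ^ N := by
  refine Summable.of_norm_bounded (g := fun N => 2 * |t| ^ N)
    ((summable_geometric_of_lt_one (abs_nonneg t) ht).mul_left 2) fun N => ?_
  rw [Real.norm_eq_abs, abs_mul, abs_pow]
  exact mul_le_mul_of_nonneg_right (aT_bound Y hY N) (by positivity)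

lemma summ_nr (r : ℝ) (h0 : 0 ≤ r) (hr : r < 1) :
    Summable fun N : ℕ => 2 * ((N : ℝ) * r ^ (N - 1)) := by
  refine Summable.mul_left 2 ?_
  rw [← summable_nat_add_iff 1]
  have h1 := summable_pow_mul_geometric_of_norm_lt_one 1 (r := r)
    (by rwa [Real.norm_eq_abs, abs_of_nonneg h0])
  have h2 := summable_geometric_of_lt_one h0 hr
  refine (h1.add h2).congr fun N => ?_
  simp; ring

lemma aT_deriv (Y t : ℝ) (hY : |Y| ≤ 1) (ht : |t| < 1) :
    (Summable fun N : ℕ => aT Y N * (N * t ^ (N - 1))) ∧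
    HasDerivAt (fun s => ∑' N, aT Y N * s ^ N) (∑' N : ℕ, aT Y N * (N * t ^ (N - 1))) t := by
  obtain ⟨r, hr1, hr2⟩ := exists_between ht
  have hr0 : 0 ≤ r := (abs_nonneg t).trans hr1.le
  have bd : ∀ (n : ℕ) (y : ℝ), y ∈ Set.Ioo (-r) r →
      ‖aT Y n * (n * y ^ (n - 1))‖ ≤ 2 * ((n : ℝ) * r ^ (n - 1)) := by
    intro n y hy
    have : |y| ≤ r := (abs_lt.2 hy).le
    rw [Real.norm_eq_abs, abs_mul, abs_mul, abs_pow, Nat.abs_cast]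
    have := aT_bound Y hY n
    gcongr
  have htm : t ∈ Set.Ioo (-r) r := abs_lt.1 hr1
  refine ⟨Summable.of_norm_bounded (summ_nr r hr0 hr2) fun n => bd n t htm, ?_⟩
  refine hasDerivAt_tsum_of_isPreconnected (summ_nr r hr0 hr2) isOpen_Ioo isPreconnected_Ioo
    (fun n y _ => ?_) bd htm (aT_summable Y t hY ht) htm
  exact (hasDerivAt_pow n y).const_mul _

lemma aT_ode (Y t : ℝ) (hY : |Y| ≤ 1) (ht : |t| < 1) :
    (1 - t ^ 2) * (∑' N : ℕ, aT Y N * (N * t ^ (N - 1))) = 2 * Y * ∑' N, aT Y N * t ^ N := by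
  have hD := (aT_deriv Y t hY ht).1
  have hG := aT_summable Y t hY ht
  have e1 : ∑' N : ℕ, aT Y N * (N * t ^ (N - 1))
      = 2 * Y + ∑' K : ℕ, aT Y (K + 2) * ((K + 2) * t ^ (K + 1)) := by
    rw [hD.tsum_eq_zero_add, ((summable_nat_add_iff 1).2 hD).tsum_eq_zero_add]
    simp [aT_one]
    refine tsum_congr fun K => ?_
    ring
  have hG1 := (summable_nat_add_iff 1).2 hG
  have e2 : ∑' K : ℕ, aT Y (K + 2) * (((K : ℝ) + 2) * t ^ (K + 1))
      = ∑' K : ℕ, (t ^ 2 * (aT Y K * (K * t ^ (K - 1))) + 2 * Y * (aT Y (K + 1) * t ^ (K + 1))) := by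
    refine tsum_congr fun K => ?_
    have h := aT_rec Y K
    have h2 : t ^ 2 * (aT Y K * (K * t ^ (K - 1))) = K * aT Y K * t ^ (K + 1) := by
      rcases K with _ | K
      · simp
      · simp; ring
    rw [h2]
    linear_combination t ^ (K + 1) * h
  rw [(hD.mul_left _).tsum_add (hG1.mul_left _), tsum_mul_left, tsum_mul_left] at e2
  have e3 := hG.tsum_eq_zero_add
  rw [aT_zero] at e3
  linear_combination e1 + e2 - 2 * Y * e3

lemma aT_hasSum (Y t : ℝ) (hY : |Y| ≤ 1) (ht : |t| < 1) :
    HasSum (fun N => aT Y N * t ^ N) (gT Y t) := by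
  have hs := aT_summable Y t hY ht
  set G : ℝ → ℝ := fun s => ∑' N, aT Y N * s ^ N with hGdef
  have hd : ∀ s ∈ Set.Ioo (-1 : ℝ) 1, HasDerivAt (fun s => G s * gT (-Y) s) 0 s := by
    intro s hs
    have h1 := (aT_deriv Y s hY (abs_lt.2 hs)).2
    have h2 := gT_deriv (-Y) s hs.1 hs.2
    refine (h1.mul h2).congr_deriv ?_
    have ho := aT_ode Y s hY (abs_lt.2 hs)
    have hp : 0 < 1 + s := by linarith [hs.1]
    have hm : 0 < 1 - s := by linarith [hs.2]
    have q1 : (1 + s) ^ (-Y) = (1 + s) ^ (-Y - 1) * (1 + s) := by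
      rw [← Real.rpow_add_one hp.ne']; ring_nf
    have q2 : (1 - s) ^ (- -Y) = (1 - s) ^ (- -Y - 1) * (1 - s) := by
      rw [← Real.rpow_add_one hm.ne']; ring_nf
    simp only [gT]
    rw [q1, q2]
    linear_combination ((1 + s) ^ (-Y - 1) * (1 - s) ^ (- -Y - 1)) * ho
  have hc : G t * gT (-Y) t = G 0 * gT (-Y) 0 :=
    isOpen_Ioo.is_const_of_deriv_eq_zero isPreconnected_Ioo
      (fun s hs => (hd s hs).differentiableAt.differentiableWithinAt)
      (fun s hs => (hd s hs).deriv) (abs_lt.1 ht) (by norm_num)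
  have hG0 : G 0 = 1 := by
    simp only [hGdef]
    rw [tsum_eq_single 0]
    · simp [aT_zero]
    · intro b hb; simp [hb]
  have hp : 0 < 1 + t := by linarith [(abs_lt.1 ht).1]
  have hm : 0 < 1 - t := by linarith [(abs_lt.1 ht).2]
  have hgg : gT Y t * gT (-Y) t = 1 := by
    simp only [gT]
    rw [neg_neg, Real.rpow_neg hp.le, Real.rpow_neg hm.le]
    have := (Real.rpow_pos_of_pos hp Y).ne'
    have := (Real.rpow_pos_of_pos hm Y).ne'
    field_simp
  have : G t = gT Y t := by
    have h0 : gT (-Y) 0 = 1 := by simp [gT]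
    rw [hG0, h0] at hc
    have hne : gT (-Y) t ≠ 0 := right_ne_zero_of_mul (hgg ▸ one_ne_zero)
    exact mul_right_cancel₀ hne (by rw [hc, hgg]; ring)
  rw [← this]
  exact hs.hasSum

lemma aT_nonneg (y : ℝ) (hy : 0 ≤ y) (N : ℕ) : 0 ≤ aT y N :=
  Finset.sum_nonneg fun n _ => mul_nonneg (cT_nonneg _ _) (by positivity)

lemma aT_div_summable (y : ℝ) (hy : 0 ≤ y) (hy1 : y < 1) :
    Summable fun N : ℕ => aT y N / ((N : ℝ) + 1) := by
  have hint : IntervalIntegrable (gT y) volume 0 1 := by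
    have h1 : IntervalIntegrable (fun t : ℝ => (1 - t) ^ (-y)) volume 0 1 := by
      have := (intervalIntegral.intervalIntegrable_rpow' (a := 0) (b := 1)
        (show -1 < -y by linarith)).comp_sub_left 1
      simpa using this.symm
    refine IntervalIntegrable.continuousOn_mul h1 (f := fun t => (1 - t) ^ (-y)) ?_
    refine ContinuousOn.rpow_const (by fun_prop) fun x hx => Or.inr hy
  refine summable_of_sum_range_le (c := ∫ t in (0 : ℝ)..1, gT y t)
    (fun N => div_nonneg (aT_nonneg y hy N) (by positivity)) fun M => ?_
  have e : ∑ N ∈ Finset.range M, aT y N / ((N : ℝ) + 1)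
      = ∫ t in (0 : ℝ)..1, ∑ N ∈ Finset.range M, aT y N * t ^ N := by
    rw [intervalIntegral.integral_finsetSum]
    · refine Finset.sum_congr rfl fun N _ => ?_
      rw [intervalIntegral.integral_const_mul, integral_pow]
      simp [div_eq_mul_inv]
    · intro N _
      exact Continuous.intervalIntegrable (by fun_prop) _ _
  rw [e]
  refine intervalIntegral.integral_mono_on_of_le_Ioo zero_le_one
    (Continuous.intervalIntegrable (by fun_prop) _ _) hint fun t ht => ?_
  refine sum_le_hasSum _ (fun N _ => mul_nonneg (aT_nonneg y hy N) (pow_nonneg ht.1.le _))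
    (aT_hasSum y t ?_ ?_)
  · rw [abs_of_nonneg hy]; exact hy1.le
  · rw [abs_of_pos ht.1]; exact ht.2

lemma aT_div_summable' (X y : ℝ) (hX : |X| < 1) (hy : 0 ≤ y) (hy1 : y < 1) :
    Summable fun N : ℕ => aT y (N + 1) / ((N : ℝ) + 1 - X) := by
  have h := (summable_nat_add_iff 1).2 (aT_div_summable y hy hy1)
  refine Summable.of_nonneg_of_le (fun N => ?_) (fun N => ?_) (h.mul_left (2 / (1 - |X|)))
  · have : X < 1 := (abs_lt.1 hX).2
    refine div_nonneg (aT_nonneg y hy _) ?_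
    have : (0 : ℝ) ≤ N := by positivity
    linarith
  · have hx : X ≤ |X| := le_abs_self X
    have hx0 := abs_nonneg X
    have hN : (0 : ℝ) ≤ N := by positivity
    have ha := aT_nonneg y hy (N + 1)
    have h1 : 0 < 1 - |X| := by linarith
    have h2 : 0 < (N : ℝ) + 1 - X := by linarith
    push_cast
    rw [div_mul_div_comm, div_le_div_iff₀ h2 (by positivity)]
    have : (1 - |X|) * ((N : ℝ) + 1 + 1) ≤ 2 * ((N : ℝ) + 1 - X) := by nlinarith
    nlinarith

lemma gT_sub_one_le (Y t : ℝ) (hY₁ : -1 < Y) (hY₂ : Y < 0) (h0 : 0 < t) (h1 : t < 1) :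
    |gT Y t - 1| ≤ 4 * t := by
  rcases le_or_gt t (1 / 2) with h | h
  · have hY : |Y| ≤ 1 := abs_le.2 ⟨hY₁.le, by linarith⟩
    have hs := aT_hasSum Y t hY (by rwa [abs_of_pos h0])
    have hs1 := (hasSum_nat_add_iff' 1).2 hs
    simp only [Finset.sum_range_one, aT_zero, pow_zero, mul_one] at hs1
    have hg : HasSum (fun N : ℕ => 2 * t * t ^ N) (2 * t * (1 - t)⁻¹) :=
      (hasSum_geometric_of_lt_one h0.le h1).mul_left _
    have hb : ∀ N : ℕ, ‖aT Y (N + 1) * t ^ (N + 1)‖ ≤ 2 * t * t ^ N := by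
      intro N
      rw [Real.norm_eq_abs, abs_mul, abs_pow, abs_of_pos h0]
      calc _ ≤ 2 * t ^ (N + 1) := by
            have := aT_bound Y hY (N + 1)
            gcongr
        _ = _ := by ring
    have := hs1.norm_le_of_bounded hg hb
    rw [Real.norm_eq_abs] at this
    refine this.trans ?_
    have : (1 - t)⁻¹ ≤ 2 := by
      rw [inv_le_comm₀ (by linarith) (by norm_num)]; linarith
    nlinarith
  · have hp : 0 < 1 + t := by linarith
    have hm : 0 < 1 - t := by linarith
    have a1 : (1 + t) ^ Y ≤ 1 := Real.rpow_le_one_of_one_le_of_nonpos (by linarith) hY₂.le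
    have a2 : (1 - t) ^ (-Y) ≤ 1 := Real.rpow_le_one hm.le (by linarith) (by linarith)
    have b1 := Real.rpow_pos_of_pos hp Y
    have b2 := Real.rpow_pos_of_pos hm (-Y)
    have g0 : 0 ≤ gT Y t := (mul_pos b1 b2).le
    have g1 : gT Y t ≤ 1 := mul_le_one₀ a1 b2.le a2
    rw [abs_le]; constructor <;> linarith

lemma int_rpow_Ioo (s : ℝ) (hs : -1 < s) :
    IntegrableOn (fun t : ℝ => t ^ s) (Set.Ioo 0 1) ∧
      ∫ t in Set.Ioo (0 : ℝ) 1, t ^ s = 1 / (s + 1) := by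
  constructor
  · have := intervalIntegral.intervalIntegrable_rpow' (a := 0) (b := 1) hs
    rwa [intervalIntegrable_iff_integrableOn_Ioo_of_le zero_le_one] at this
  · rw [← integral_Ioc_eq_integral_Ioo, ← intervalIntegral.integral_of_le zero_le_one,
      integral_rpow (Or.inl hs), Real.one_rpow, Real.zero_rpow (by linarith)]
    simp

lemma sum_eq_integral (X Y : ℝ) (hX : |X| < 1) (hY₁ : -1 < Y) (hY₂ : Y < 0) :
    ∑' N : ℕ, aT Y (N + 1) / ((N : ℝ) + 1 - X)
      = ∫ t in Set.Ioo (0 : ℝ) 1, (gT Y t - 1) * t ^ (-X - 1) := by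
  have hX1 : X < 1 := (abs_lt.1 hX).2
  have hY : |Y| < 1 := abs_lt.2 ⟨hY₁, by linarith⟩
  have hs : ∀ N : ℕ, -1 < (N : ℝ) - X := fun N => by
    have : (0 : ℝ) ≤ N := by positivity
    linarith
  have key := hasSum_integral_of_summable_integral_norm (μ := volume.restrict (Set.Ioo (0 : ℝ) 1))
    (F := fun (N : ℕ) (t : ℝ) => aT Y (N + 1) * t ^ ((N : ℝ) - X))
    (fun N => (int_rpow_Ioo _ (hs N)).1.const_mul _) ?_
  · have e1 : ∀ N : ℕ, ∫ t in Set.Ioo (0 : ℝ) 1, aT Y (N + 1) * t ^ ((N : ℝ) - X)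
        = aT Y (N + 1) / ((N : ℝ) + 1 - X) := by
      intro N
      rw [integral_const_mul, (int_rpow_Ioo _ (hs N)).2, mul_one_div]
      congr 1; ring
    simp only [e1] at key
    rw [key.tsum_eq]
    refine setIntegral_congr_fun measurableSet_Ioo fun t ht => ?_
    have h := (hasSum_nat_add_iff' 1).2 (aT_hasSum Y t hY.le (by rw [abs_of_pos ht.1]; exact ht.2))
    simp only [Finset.sum_range_one, aT_zero, pow_zero, mul_one] at h
    have h2 := h.mul_right (t ^ (-X - 1))
    rw [← h2.tsum_eq]
    refine tsum_congr fun N => ?_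
    rw [mul_assoc, ← Real.rpow_natCast, ← Real.rpow_add ht.1]
    congr 2
    push_cast; ring
  · refine Summable.of_nonneg_of_le (fun N => integral_nonneg fun t => norm_nonneg _) (fun N => ?_)
      (aT_div_summable' X |Y| hX (abs_nonneg Y) hY)
    have e1 : ∫ t in Set.Ioo (0 : ℝ) 1, ‖aT Y (N + 1) * t ^ ((N : ℝ) - X)‖
        = ∫ t in Set.Ioo (0 : ℝ) 1, |aT Y (N + 1)| * t ^ ((N : ℝ) - X) := by
      refine setIntegral_congr_fun measurableSet_Ioo fun t ht => ?_
      rw [Real.norm_eq_abs, abs_mul, abs_of_nonneg (Real.rpow_nonneg ht.1.le _)]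
    rw [e1, integral_const_mul, (int_rpow_Ioo _ (hs N)).2, mul_one_div]
    have := hs N
    have h3 : (N : ℝ) - X + 1 = (N : ℝ) + 1 - X := by ring
    rw [h3]
    exact div_le_div_of_nonneg_right (aT_abs_le Y _) (by linarith)

lemma gT_cont (Y : ℝ) : ContinuousOn (gT Y) (Set.Ioo 0 1) := fun t ht =>
  (gT_deriv Y t (by linarith [ht.1]) ht.2).continuousAt.continuousWithinAt

lemma second_integrable (X Y : ℝ) (hX : |X| < 1) (hY₁ : -1 < Y) (hY₂ : Y < 0) :
    IntegrableOn (fun t : ℝ => (gT Y t - 1) * t ^ (-X - 1)) (Set.Ioo 0 1) := by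
  have hX1 : X < 1 := (abs_lt.1 hX).2
  refine Integrable.mono' (g := fun t => 4 * t ^ (-X))
    ((int_rpow_Ioo (-X) (by linarith)).1.const_mul 4) ?_ ?_
  · refine ContinuousOn.aestronglyMeasurable ?_ measurableSet_Ioo
    refine ((gT_cont Y).sub continuousOn_const).mul ?_
    exact ContinuousOn.rpow_const continuousOn_id fun x hx => Or.inl hx.1.ne'
  · refine (ae_restrict_iff' measurableSet_Ioo).2 (Filter.Eventually.of_forall fun t ht => ?_)
    rw [Real.norm_eq_abs, abs_mul, abs_of_nonneg (Real.rpow_nonneg ht.1.le _)]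
    have q : t ^ (-X) = t ^ (-X - 1) * t := by
      rw [← Real.rpow_add_one ht.1.ne']; ring_nf
    rw [q]
    have := gT_sub_one_le Y t hY₁ hY₂ ht.1 ht.2
    have := mul_le_mul_of_nonneg_right this (Real.rpow_nonneg ht.1.le (-X - 1))
    linarith

lemma first_integrable (X Y : ℝ) (hX : |X| < 1) (hY₂ : Y < 0) :
    IntegrableOn (fun t : ℝ => t ^ (-X) * (1 - t) ^ (-Y - 1) * (1 + t) ^ (Y - 1))
      (Set.Ioo 0 1) := by
  have hX1 : X < 1 := (abs_lt.1 hX).2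
  have hb := (Complex.betaIntegral_convergent (u := ((1 - X : ℝ) : ℂ)) (v := ((-Y : ℝ) : ℂ))
    (by rw [Complex.ofReal_re]; linarith) (by rw [Complex.ofReal_re]; linarith)).norm
  have hb' : IntervalIntegrable (fun t : ℝ => t ^ (-X) * (1 - t) ^ (-Y - 1)) volume 0 1 := by
    rw [intervalIntegrable_iff_integrableOn_Ioo_of_le zero_le_one] at hb ⊢
    refine hb.congr_fun (fun t ht => ?_) measurableSet_Ioo
    have hm : 0 < 1 - t := by linarith [ht.2]
    simp only
    rw [norm_mul, Complex.norm_cpow_eq_rpow_re_of_pos ht.1]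
    have : (1 : ℂ) - (t : ℂ) = ((1 - t : ℝ) : ℂ) := by push_cast; rfl
    rw [this, Complex.norm_cpow_eq_rpow_re_of_pos hm]
    simp
  have := hb'.mul_continuousOn (g := fun t => (1 + t) ^ (Y - 1)) (by
    refine ContinuousOn.rpow_const (by fun_prop) fun x hx => Or.inl ?_
    rw [Set.uIcc_of_le zero_le_one] at hx
    have := hx.1
    positivity)
  rwa [intervalIntegrable_iff_integrableOn_Ioo_of_le zero_le_one] at this

lemma by_parts (X Y : ℝ) (hX : |X| < 1) (hY₁ : -1 < Y) (hY₂ : Y < 0) :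
    2 * Y * (∫ t in Set.Ioo (0 : ℝ) 1, t ^ (-X) * (1 - t) ^ (-Y - 1) * (1 + t) ^ (Y - 1))
      - X * (∫ t in Set.Ioo (0 : ℝ) 1, (gT Y t - 1) * t ^ (-X - 1)) = -1 := by
  have hX1 : X < 1 := (abs_lt.1 hX).2
  have i1 := (first_integrable X Y hX hY₂).const_mul (2 * Y)
  have i2 := (second_integrable X Y hX hY₁ hY₂).const_mul X
  have hF := intervalIntegral.integral_eq_sub_of_hasDerivAt_of_tendsto (a := 0) (b := 1)
    (f := fun t : ℝ => (gT Y t - 1) * t ^ (-X))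
    (f' := fun t => 2 * Y * (t ^ (-X) * (1 - t) ^ (-Y - 1) * (1 + t) ^ (Y - 1))
      - X * ((gT Y t - 1) * t ^ (-X - 1))) zero_lt_one (fa := 0) (fb := -1) ?_ ?_ ?_ ?_
  · rw [intervalIntegral.integral_of_le zero_le_one, integral_Ioc_eq_integral_Ioo,
      integral_sub i1 i2, integral_const_mul, integral_const_mul] at hF
    rw [hF]; norm_num
  · intro t ht
    have h1 := (gT_deriv Y t (by linarith [ht.1]) ht.2).sub_const 1
    have h2 := Real.hasDerivAt_rpow_const (x := t) (p := -X) (Or.inl ht.1.ne')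
    refine (h1.mul h2).congr_deriv ?_
    ring
  · rw [intervalIntegrable_iff_integrableOn_Ioo_of_le zero_le_one]
    exact i1.sub i2
  · have hl : Filter.Tendsto (fun t : ℝ => 4 * t ^ (1 - X)) (nhdsWithin 0 (Set.Ioi 0)) (nhds 0) := by
      have : ContinuousAt (fun t : ℝ => 4 * t ^ (1 - X)) 0 :=
        continuousAt_const.mul (Real.continuousAt_rpow_const _ _ (Or.inr (by linarith)))
      have h := this.tendsto
      rw [Real.zero_rpow (by linarith), mul_zero] at h
      exact h.mono_left nhdsWithin_le_nhds
    refine squeeze_zero_norm' ?_ hl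
    filter_upwards [Ioo_mem_nhdsGT (zero_lt_one (α := ℝ))] with t ht
    rw [Real.norm_eq_abs, abs_mul, abs_of_nonneg (Real.rpow_nonneg ht.1.le _)]
    have q : t ^ (1 - X) = t ^ (-X) * t := by
      rw [← Real.rpow_add_one ht.1.ne']; ring_nf
    rw [q]
    have := gT_sub_one_le Y t hY₁ hY₂ ht.1 ht.2
    have := mul_le_mul_of_nonneg_right this (Real.rpow_nonneg ht.1.le (-X))
    linarith
  · have hc : ContinuousAt (fun t : ℝ => (gT Y t - 1) * t ^ (-X)) 1 := by
      refine ContinuousAt.mul (ContinuousAt.sub (ContinuousAt.mul ?_ ?_) continuousAt_const) ?_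
      · exact ContinuousAt.rpow_const (by fun_prop) (Or.inl (by norm_num))
      · exact ContinuousAt.rpow_const (by fun_prop) (Or.inr (by linarith))
      · exact Real.continuousAt_rpow_const _ _ (Or.inl one_ne_zero)
    have h := hc.tendsto
    have e : (gT Y 1 - 1) * (1 : ℝ) ^ (-X) = -1 := by
      simp [gT, Real.zero_rpow (show -Y ≠ 0 by linarith)]
    rw [e] at h
    exact h.mono_left nhdsWithin_le_nhds

lemma fin_sum (Y : ℝ) (N : ℕ) :
    HasSum (fun n : ℕ => cT (n + 1) (N + 1) * Y ^ (n + 1)) (aT Y (N + 1)) := by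
  have h : HasSum (fun n : ℕ => cT n (N + 1) * Y ^ n) (aT Y (N + 1)) := by
    refine hasSum_sum_of_ne_finset_zero fun n hn => ?_
    rw [cT_zero_of_lt _ _ (by simp at hn; omega), zero_mul]
  have := (hasSum_nat_add_iff' 1).2 h
  simpa [cT] using this

lemma geo_sum (X : ℝ) (hX : |X| < 1) (N : ℕ) :
    HasSum (fun m : ℕ => (X / ((N : ℝ) + 1)) ^ (m + 1)) (X / ((N : ℝ) + 1 - X)) := by
  have hN : (0 : ℝ) ≤ N := by positivity
  have h1 : |X / ((N : ℝ) + 1)| < 1 := by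
    rw [abs_div, abs_of_pos (by positivity : (0 : ℝ) < (N : ℝ) + 1), div_lt_one (by positivity)]
    linarith
  have := (hasSum_geometric_of_abs_lt_one h1).mul_left (X / ((N : ℝ) + 1))
  have hX1 : X < 1 := (abs_lt.1 hX).2
  have hne : (N : ℝ) + 1 - X ≠ 0 := by linarith
  have e : X / ((N : ℝ) + 1) * (1 - X / ((N : ℝ) + 1))⁻¹ = X / ((N : ℝ) + 1 - X) := by
    have : (1 : ℝ) - X / ((N : ℝ) + 1) = ((N : ℝ) + 1 - X) / ((N : ℝ) + 1) := by
      field_simp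
    rw [this]; field_simp
  rw [e] at this
  have e2 : (fun m : ℕ => (X / ((N : ℝ) + 1)) ^ (m + 1))
      = fun m : ℕ => X / ((N : ℝ) + 1) * (X / ((N : ℝ) + 1)) ^ m := by
    funext m; ring
  rw [e2]
  exact this

/-- the summand -/
noncomputable def trm (X Y : ℝ) (q : ℕ × (ℕ × ℕ)) : ℝ :=
  (X / ((q.1 : ℝ) + 1)) ^ (q.2.1 + 1) * (cT (q.2.2 + 1) (q.1 + 1) * Y ^ (q.2.2 + 1))

lemma inner_hasSum (X Y : ℝ) (hX : |X| < 1) (N : ℕ) :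
    HasSum (fun p : ℕ × ℕ => trm X Y (N, p)) (X / ((N : ℝ) + 1 - X) * aT Y (N + 1)) := by
  have h1 := geo_sum X hX N
  have h2 := fin_sum Y N
  have h3 := summable_mul_of_summable_norm h1.summable.norm h2.summable.norm
  have h4 := h1.mul h2 h3
  simpa only [trm] using h4

lemma trm_summable (X Y : ℝ) (hX : |X| < 1) (hY : |Y| < 1) : Summable (trm X Y) := by
  have hX' : |(|X|)| < 1 := by rwa [abs_abs]
  have hs : Summable (trm |X| |Y|) := by
    rw [summable_prod_of_nonneg]
    · refine ⟨fun N => (inner_hasSum |X| |Y| hX' N).summable, ?_⟩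
      simp only [(inner_hasSum |X| |Y| hX' _).tsum_eq]
      refine ((aT_div_summable' |X| |Y| hX' (abs_nonneg _) hY).mul_left |X|).congr fun N => ?_
      ring
    · intro q
      have := cT_nonneg (q.2.2 + 1) (q.1 + 1)
      simp only [trm, Pi.zero_apply]
      positivity
  refine Summable.of_norm_bounded hs fun q => le_of_eq ?_
  simp only [trm, Real.norm_eq_abs, abs_mul, abs_pow, abs_div]
  rw [abs_of_nonneg (cT_nonneg _ _), abs_of_nonneg (by positivity : (0 : ℝ) ≤ (q.1 : ℝ) + 1)]

/-- **Theorem (generating series of height-one multiple T-values).**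
For `|X| < 1` and `−1 < Y < 0`,
`∑_{m,n ≥ 1} T(1^{n−1}, m+1) X^m Y^{n−1} = 2 ∫₀¹ t^{−X} (1−t)^{−Y−1} (1+t)^{Y−1} dt + 1/Y`.
(The pair `p = (p₁, p₂)` below corresponds to `(m, n) = (p₁ + 1, p₂ + 1)`.) -/
theorem MTV_height_one_generating (X Y : ℝ) (hX : |X| < 1) (hY₁ : -1 < Y) (hY₂ : Y < 0) :
    (∑' p : ℕ × ℕ,
        MTV (List.replicate p.2 1 ++ [p.1 + 2]) * X ^ (p.1 + 1) * Y ^ p.2)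
      = 2 * (∫ t in Set.Ioo (0 : ℝ) 1,
          t ^ (-X) * (1 - t) ^ (-Y - 1) * (1 + t) ^ (Y - 1)) + 1 / Y := by
  have hYa : |Y| < 1 := abs_lt.2 ⟨hY₁, by linarith⟩
  have hY0 : Y ≠ 0 := hY₂.ne
  have e1 : ∀ p : ℕ × ℕ, MTV (List.replicate p.2 1 ++ [p.1 + 2]) * X ^ (p.1 + 1) * Y ^ p.2
      = (1 / Y) * ∑' N : ℕ, trm X Y (N, p) := by
    intro p
    rw [MTV_eq, mul_assoc, ← tsum_mul_right, ← tsum_mul_left]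
    refine tsum_congr fun N => ?_
    simp only [trm]
    rw [div_pow]
    field_simp
    ring
  rw [tsum_congr e1, tsum_mul_left]
  have hs := trm_summable X Y hX hYa
  have e2 : ∑' p : ℕ × ℕ, ∑' N : ℕ, trm X Y (N, p) = ∑' N : ℕ, ∑' p : ℕ × ℕ, trm X Y (N, p) :=
    Summable.tsum_comm (f := fun N p => trm X Y (N, p)) hs
  rw [e2]
  simp only [(inner_hasSum X Y hX _).tsum_eq]
  have e3 : ∀ N : ℕ, X / ((N : ℝ) + 1 - X) * aT Y (N + 1)
      = X * (aT Y (N + 1) / ((N : ℝ) + 1 - X)) := fun N => by ring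
  rw [tsum_congr e3, tsum_mul_left, sum_eq_integral X Y hX hY₁ hY₂]
  have hb := by_parts X Y hX hY₁ hY₂
  field_simp
  linarith
end

section
/- Single-integral expression for height-one multiple T-values: for integers m ≥ 1 and n ≥ 1, T(1,...,1,m+1) (with n−1 ones before m+1) = 1/((n−1)! · m!) · ∫_0^1 (log((1+t)/(1−t)))^{n−1} · (log(1/t))^m · (2/(1−t²)) dt. -/
open MeasureTheory


abbrev TIdx (n : ℕ) : Type :=
  {f : Fin n → ℕ // StrictMono f ∧ ∀ i, f i % 2 = ((i : ℕ) + 1) % 2}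

def lastv : (n : ℕ) → (Fin n → ℕ) → ℕ
  | 0, _ => 0
  | n + 1, f => f (Fin.last n)

lemma lastv_mod (n : ℕ) (f : TIdx n) : lastv n f.1 % 2 = n % 2 := by
  cases n with
  | zero => rfl
  | succ n => simpa [lastv] using f.2.2 (Fin.last n)

lemma le_lastv (n : ℕ) (f : TIdx n) (i : Fin n) : f.1 i ≤ lastv n f.1 := by
  cases n with
  | zero => exact i.elim0
  | succ n => exact f.2.1.monotone (Fin.le_last i)

/-- restriction to the first `n` entries -/
def restrictIdx (n : ℕ) (g : TIdx (n + 1)) : TIdx n :=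
  ⟨fun i => g.1 i.castSucc, fun _ _ h => g.2.1 (by simpa using h),
    fun i => by simpa using g.2.2 i.castSucc⟩

lemma lastv_restrictIdx_lt (n : ℕ) (g : TIdx (n + 1)) : lastv n (restrictIdx n g).1 < g.1 (Fin.last n) := by
  cases n with
  | zero =>
    have := g.2.2 (Fin.last 0)
    simp only [lastv]
    simp at this
    simp
    omega
  | succ n => exact g.2.1 (Fin.castSucc_lt_last _)

/-- append an entry -/
def appendIdx (n : ℕ) (f : TIdx n) (k : ℕ) : TIdx (n + 1) :=
  ⟨Fin.snoc (α := fun _ => ℕ) f.1 (lastv n f.1 + 1 + 2 * k), by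
    constructor
    · rw [Fin.strictMono_iff_lt_succ]
      intro i
      cases n with
      | zero => exact i.elim0
      | succ n =>
        induction i using Fin.lastCases with
        | last =>
          rw [Fin.succ_last, Fin.snoc_last, Fin.snoc_castSucc]
          simp only [lastv]; omega
        | cast i =>
          rw [Fin.succ_castSucc, Fin.snoc_castSucc, Fin.snoc_castSucc]
          exact f.2.1 (Fin.castSucc_lt_succ)
    · intro i
      induction i using Fin.lastCases with
      | last =>
        have := lastv_mod n f
        rw [Fin.snoc_last, Fin.val_last]; omega
      | cast i =>
        rw [Fin.snoc_castSucc]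
        simpa using f.2.2 i⟩

def tequiv (n : ℕ) : TIdx n × ℕ ≃ TIdx (n + 1) where
  toFun p := appendIdx n p.1 p.2
  invFun g := (restrictIdx n g, (g.1 (Fin.last n) - lastv n (restrictIdx n g).1 - 1) / 2)
  left_inv p := by
    obtain ⟨f, k⟩ := p
    have h : restrictIdx n (appendIdx n f k) = f := by
      apply Subtype.ext; funext i; simp [restrictIdx, appendIdx]
    ext1
    · exact h
    · simp only [h]
      simp only [appendIdx, Fin.snoc_last]; omega
  right_inv g := by
    apply Subtype.ext
    funext i
    induction i using Fin.lastCases with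
    | last =>
      simp only [appendIdx, Fin.snoc_last]
      have h1 := lastv_restrictIdx_lt n g
      have h2 := lastv_mod n (restrictIdx n g)
      have h3 := g.2.2 (Fin.last n)
      rw [Fin.val_last] at h3
      omega
    | cast i => simp [appendIdx, restrictIdx]

open ENNReal

noncomputable def FF (n : ℕ) (x : ℝ≥0∞) : ℝ≥0∞ :=
  ∑' f : TIdx n, (∏ i, (2 / (f.1 i : ℝ≥0∞))) * x ^ (lastv n f.1)

lemma geom2 (t : ℝ) (h0 : 0 < t) (h1 : t < 1) :
    ∑' k : ℕ, 2 * ENNReal.ofReal t ^ (2 * k) = ENNReal.ofReal (2 / (1 - t ^ 2)) := by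
  have h : t ^ 2 < 1 := by nlinarith
  rw [ENNReal.tsum_mul_left]
  simp_rw [pow_mul]
  rw [ENNReal.tsum_geometric, ENNReal.ofReal_div_of_pos (by linarith),
    ENNReal.ofReal_sub _ (by positivity), ENNReal.ofReal_pow h0.le, div_eq_mul_inv]
  simp

lemma FF_mul (n : ℕ) (t : ℝ) (h0 : 0 < t) (h1 : t < 1) :
    FF n (ENNReal.ofReal t) * ENNReal.ofReal (2 / (1 - t ^ 2)) =
    ∑' g : TIdx (n + 1), (∏ i : Fin n, (2 / (g.1 i.castSucc : ℝ≥0∞))) *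
      (2 * ENNReal.ofReal t ^ (g.1 (Fin.last n) - 1)) := by
  rw [← geom2 t h0 h1, ← (tequiv n).tsum_eq, ENNReal.summable.tsum_prod' (fun _ => ENNReal.summable), FF, ← ENNReal.tsum_mul_right]
  congr 1; funext f
  rw [← ENNReal.tsum_mul_left]
  congr 1; funext k
  have : (lastv n f.1 + 1 + 2 * k) - 1 = lastv n f.1 + 2 * k := by omega
  simp only [tequiv, Equiv.coe_fn_mk, appendIdx, Fin.snoc_castSucc, Fin.snoc_last, this, pow_add]
  ring

lemma pow_int (x : ℝ) (h0 : 0 < x) (j : ℕ) (hj : 0 < j) :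
    ∫⁻ t in Set.Ioo 0 x, 2 * ENNReal.ofReal t ^ (j - 1) = 2 / (j : ℝ≥0∞) * ENNReal.ofReal x ^ j := by
  obtain ⟨j, rfl⟩ : ∃ i, j = i + 1 := ⟨j - 1, by omega⟩
  simp only [Nat.add_sub_cancel]
  rw [lintegral_const_mul _ (by fun_prop)]
  have : ∫⁻ t in Set.Ioo 0 x, ENNReal.ofReal t ^ j = ENNReal.ofReal (∫ t in (0:ℝ)..x, t ^ j) := by
    rw [intervalIntegral.integral_of_le h0.le, integral_Ioc_eq_integral_Ioo,
      ofReal_integral_eq_lintegral_ofReal]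
    · refine setLIntegral_congr_fun measurableSet_Ioo fun t ht => ?_
      exact (ENNReal.ofReal_pow ht.1.le _).symm
    · exact ((continuous_pow j).integrableOn_Icc (a := 0) (b := x)).mono_set Set.Ioo_subset_Icc_self
    · exact (ae_restrict_iff' measurableSet_Ioo).2 (.of_forall fun t ht => pow_nonneg ht.1.le _)
  rw [this, integral_pow, zero_pow (by omega), sub_zero, ENNReal.ofReal_div_of_pos (by positivity),
    ENNReal.ofReal_pow h0.le]
  rw [show ((j:ℝ) + 1) = ((j + 1 : ℕ) : ℝ) by push_cast; rfl, ENNReal.ofReal_natCast]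
  simp only [div_eq_mul_inv]; ring

lemma TIdx_pos {n : ℕ} (g : TIdx (n + 1)) : 0 < g.1 (Fin.last n) :=
  (Nat.zero_le _).trans_lt (lastv_restrictIdx_lt n g)

lemma FF_succ (n : ℕ) (x : ℝ) (h0 : 0 < x) (h1 : x < 1) :
    FF (n + 1) (ENNReal.ofReal x) =
      ∫⁻ t in Set.Ioo 0 x, FF n (ENNReal.ofReal t) * ENNReal.ofReal (2 / (1 - t ^ 2)) := by
  rw [setLIntegral_congr_fun measurableSet_Ioo
    fun t ht => FF_mul n t ht.1 (ht.2.trans h1)]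
  rw [lintegral_tsum (fun g => by fun_prop), FF]
  congr 1; funext g
  rw [lintegral_const_mul _ (by fun_prop), pow_int x h0 _ (TIdx_pos g), Fin.prod_univ_castSucc]
  simp only [lastv]; ring

noncomputable def LL (t : ℝ) : ℝ := Real.log ((1 + t) / (1 - t))

lemma LL_deriv (t : ℝ) (h0 : 0 ≤ t) (h1 : t < 1) : HasDerivAt LL (2 / (1 - t ^ 2)) t := by
  have a : (1 + t) ≠ 0 := by linarith
  have b : (1 - t) ≠ 0 := by linarith
  have c : (1 - t ^ 2) ≠ 0 := by nlinarith
  have := (((hasDerivAt_id t).const_add 1).div ((hasDerivAt_id t).const_sub 1) b).log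
    (div_ne_zero a b)
  refine this.congr_deriv ?_
  simp only [id, Pi.div_apply]
  have e : 1 - t ^ 2 = (1 + t) * (1 - t) := by ring
  rw [e]
  field_simp
  ring

lemma LL_nonneg (t : ℝ) (h0 : 0 ≤ t) (h1 : t < 1) : 0 ≤ LL t := by
  apply Real.log_nonneg
  rw [le_div_iff₀ (by linarith)]; linarith

lemma FF_eq (n : ℕ) : ∀ (x : ℝ) (_ : 0 < x) (_ : x < 1),
    FF n (ENNReal.ofReal x) = ENNReal.ofReal (LL x ^ n / n.factorial) := by
  induction n with
  | zero =>
    intro x h0 h1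
    have : Unique (TIdx 0) := ⟨⟨⟨Fin.elim0, fun i => i.elim0, fun i => i.elim0⟩⟩,
      fun f => Subtype.ext (funext fun i => i.elim0)⟩
    simp [FF, lastv, tsum_fintype]
  | succ n ih =>
    intro x h0 h1
    have hd : ∀ t ∈ Set.uIcc 0 x, HasDerivAt (fun t => LL t ^ (n + 1) / (n + 1).factorial)
        (LL t ^ n / n.factorial * (2 / (1 - t ^ 2))) t := by
      intro t ht
      rw [Set.uIcc_of_le h0.le] at ht
      refine (((LL_deriv t ht.1 (ht.2.trans_lt h1)).pow (n + 1)).div_const _).congr_deriv ?_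
      rw [Nat.factorial_succ]
      have : (n.factorial : ℝ) ≠ 0 := by positivity
      push_cast
      field_simp
    have hc : ContinuousOn (fun t => LL t ^ n / n.factorial * (2 / (1 - t ^ 2))) (Set.uIcc 0 x) := by
      rw [Set.uIcc_of_le h0.le]
      have : ContinuousOn LL (Set.Icc 0 x) := fun t ht =>
        (LL_deriv t ht.1 (ht.2.trans_lt h1)).continuousAt.continuousWithinAt
      refine ((this.pow n).div_const _).mul (ContinuousOn.div (by fun_prop) (by fun_prop) ?_)
      intro t ht
      have := ht.1; have := ht.2.trans_lt h1
      nlinarith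
    have hi := intervalIntegral.integral_eq_sub_of_hasDerivAt hd hc.intervalIntegrable
    have hz : LL 0 = 0 := by simp [LL]
    rw [hz, zero_pow (by omega), zero_div, sub_zero] at hi
    rw [FF_succ n x h0 h1, ← hi, intervalIntegral.integral_of_le h0.le,
      integral_Ioc_eq_integral_Ioo, ofReal_integral_eq_lintegral_ofReal]
    · refine setLIntegral_congr_fun measurableSet_Ioo fun t ht => ?_
      have h2 := ht.2.trans h1
      have := LL_nonneg t ht.1.le h2
      rw [ih t ht.1 h2, ENNReal.ofReal_mul (by positivity)]
    · rw [Set.uIcc_of_le h0.le] at hc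
      exact hc.integrableOn_Icc.mono_set Set.Ioo_subset_Icc_self
    · refine (ae_restrict_iff' measurableSet_Ioo).2 (.of_forall fun t ht => ?_)
      have h2 := ht.2.trans h1
      have := LL_nonneg t ht.1.le h2
      have : 0 < 1 - t ^ 2 := by nlinarith [ht.1]
      change (0:ℝ) ≤ _
      positivity

lemma log_int (m j : ℕ) (hj : 0 < j) :
    ∫⁻ t in Set.Ioo (0:ℝ) 1, ENNReal.ofReal t ^ (j - 1) * ENNReal.ofReal (Real.log (1 / t) ^ m)
      = ENNReal.ofReal (m.factorial / (j : ℝ) ^ (m + 1)) := by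
  obtain ⟨j, rfl⟩ : ∃ i, j = i + 1 := ⟨j - 1, by omega⟩
  simp only [Nat.add_sub_cancel]
  have himg : Set.Ioo (0:ℝ) 1 = (fun u : ℝ => Real.exp (-u)) '' Set.Ioi 0 := by
    ext t
    constructor
    · intro ht
      refine ⟨-Real.log t, ?_, ?_⟩
      · have := Real.log_neg ht.1 ht.2
        simpa using this
      · simp [Real.exp_log ht.1]
    · rintro ⟨u, hu, rfl⟩
      have : 0 < u := hu
      exact ⟨Real.exp_pos _, by simpa using this⟩
  have hG := Real.integral_rpow_mul_exp_neg_mul_Ioi (a := m + 1) (r := j + 1)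
    (by positivity) (by positivity)
  rw [Real.Gamma_nat_eq_factorial] at hG
  have hG' : ∫ u in Set.Ioi (0:ℝ), u ^ m * Real.exp (-((j + 1) * u)) =
      m.factorial / ((j + 1 : ℕ) : ℝ) ^ (m + 1) := by
    have e : ((m:ℝ) + 1) = ((m + 1 : ℕ) : ℝ) := by push_cast; rfl
    simp only [add_sub_cancel_right, Real.rpow_natCast] at hG
    rw [hG, e, Real.rpow_natCast]
    push_cast
    rw [one_div, inv_pow]; field_simp
  rw [himg, lintegral_image_eq_lintegral_abs_deriv_mul (f' := fun u => -Real.exp (-u))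
    measurableSet_Ioi, ← hG', ofReal_integral_eq_lintegral_ofReal]
  · refine setLIntegral_congr_fun measurableSet_Ioi fun u hu => ?_
    have hu : 0 < u := hu
    rw [← ENNReal.ofReal_pow (Real.exp_pos _).le, ← ENNReal.ofReal_mul (by positivity),
      ← ENNReal.ofReal_mul (by positivity), abs_neg, abs_of_pos (Real.exp_pos _), one_div,
      ← Real.exp_neg, neg_neg, Real.log_exp, ← Real.exp_nat_mul, ← mul_assoc, ← Real.exp_add,
      mul_comm]
    congr 3; ring
  · apply Integrable.of_integral_ne_zero
    rw [hG']; positivity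
  · refine (ae_restrict_iff' measurableSet_Ioi).2 (.of_forall fun t ht => ?_)
    have ht : 0 < t := ht
    change (0:ℝ) ≤ _
    positivity
  · intro u _
    have := (hasDerivAt_neg u).exp
    exact (this.congr_deriv (by simp)).hasDerivWithinAt
  · intro a _ b _ h
    simpa using h

lemma MTV_cast (k : List ℕ) (r : ℕ) (h : k.length = r) :
    MTV k = 2 ^ r * ∑' f : TIdx r, ∏ i : Fin r, (1 : ℝ) / (f.1 i : ℝ) ^ k.get (i.cast h.symm) := by
  subst h; rfl

lemma main_aux (m n : ℕ) :
    ∫⁻ t in Set.Ioo (0:ℝ) 1, FF n (ENNReal.ofReal t) * ENNReal.ofReal (2 / (1 - t ^ 2)) *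
        ENNReal.ofReal (Real.log (1 / t) ^ m)
      = ∑' g : TIdx (n + 1), (∏ i : Fin n, (2 / (g.1 i.castSucc : ℝ≥0∞))) *
      (2 * ENNReal.ofReal (m.factorial / (g.1 (Fin.last n) : ℝ) ^ (m + 1))) := by
  have : ∀ t ∈ Set.Ioo (0:ℝ) 1, FF n (ENNReal.ofReal t) * ENNReal.ofReal (2 / (1 - t ^ 2)) *
        ENNReal.ofReal (Real.log (1 / t) ^ m) = ∑' g : TIdx (n + 1), (∏ i : Fin n, (2 / (g.1 i.castSucc : ℝ≥0∞))) *
      (2 * (ENNReal.ofReal t ^ (g.1 (Fin.last n) - 1) * ENNReal.ofReal (Real.log (1 / t) ^ m))) := by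
    intro t ht
    rw [FF_mul n t ht.1 ht.2, ← ENNReal.tsum_mul_right]
    congr 1; funext g; ring
  rw [setLIntegral_congr_fun measurableSet_Ioo this, lintegral_tsum (fun g => by fun_prop)]
  congr 1; funext g
  rw [lintegral_const_mul _ (by fun_prop), lintegral_const_mul _ (by fun_prop),
    log_int _ _ (TIdx_pos g)]

/-- **Theorem (single-integral expression for height-one multiple T-values).**
For `m, n ≥ 1`,
`T(1^{n−1}, m+1)
  = 1/((n−1)!·m!) ∫₀¹ (log((1+t)/(1−t)))^{n−1} (log(1/t))^m · 2/(1−t²) dt`. -/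
theorem MTV_height_one_integral (m n : ℕ) (hm : 1 ≤ m) (hn : 1 ≤ n) :
    MTV (List.replicate (n - 1) 1 ++ [m + 1])
      = 1 / ((n - 1).factorial * m.factorial : ℝ)
        * ∫ t in Set.Ioo (0 : ℝ) 1,
            (Real.log ((1 + t) / (1 - t))) ^ (n - 1) * (Real.log (1 / t)) ^ m
              * (2 / (1 - t ^ 2)) := by
  obtain ⟨n, rfl⟩ : ∃ i, n = i + 1 := ⟨n - 1, by omega⟩
  simp only [Nat.add_sub_cancel]
  have hnn : ∀ t ∈ Set.Ioo (0:ℝ) 1, 0 ≤ LL t ∧ 0 ≤ Real.log (1 / t) ∧ 0 < 1 - t ^ 2 := by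
    intro t ht
    refine ⟨LL_nonneg t ht.1.le ht.2, Real.log_nonneg ?_, by nlinarith [ht.1, ht.2]⟩
    rw [le_div_iff₀ ht.1]; linarith [ht.2]
  have hF : (n.factorial : ℝ) ≠ 0 := by positivity
  have hM : (m.factorial : ℝ) ≠ 0 := by positivity
  have hI : ∫ t in Set.Ioo (0 : ℝ) 1, (Real.log ((1 + t) / (1 - t))) ^ n * (Real.log (1 / t)) ^ m
              * (2 / (1 - t ^ 2)) = n.factorial *
      (∫⁻ t in Set.Ioo (0:ℝ) 1, FF n (ENNReal.ofReal t) * ENNReal.ofReal (2 / (1 - t ^ 2)) *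
        ENNReal.ofReal (Real.log (1 / t) ^ m)).toReal := by
    have : ∀ t ∈ Set.Ioo (0:ℝ) 1, FF n (ENNReal.ofReal t) * ENNReal.ofReal (2 / (1 - t ^ 2)) *
        ENNReal.ofReal (Real.log (1 / t) ^ m) = ENNReal.ofReal (LL t ^ n / n.factorial *
          (2 / (1 - t ^ 2)) * Real.log (1 / t) ^ m) := by
      intro t ht
      obtain ⟨h1, h2, h3⟩ := hnn t ht
      rw [FF_eq n t ht.1 ht.2, ENNReal.ofReal_mul (by positivity), ENNReal.ofReal_mul (by positivity)]
    rw [setLIntegral_congr_fun measurableSet_Ioo this, ← integral_eq_lintegral_of_nonneg_ae,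
      ← integral_const_mul]
    · congr 1; funext t
      simp only [LL]; field_simp
    · refine (ae_restrict_iff' measurableSet_Ioo).2 (.of_forall fun t ht => ?_)
      obtain ⟨h1, h2, h3⟩ := hnn t ht
      change (0:ℝ) ≤ _
      positivity
    · apply Measurable.aestronglyMeasurable
      unfold LL
      fun_prop
  rw [hI, main_aux, MTV_cast _ (n + 1) (by simp), ENNReal.tsum_toReal_eq, ← tsum_mul_left,
    ← tsum_mul_left, ← tsum_mul_left]
  · congr 1; funext g
    rw [Fin.prod_univ_castSucc]
    have hg := TIdx_pos g
    have e1 : ∀ i : Fin n, (List.replicate n 1 ++ [m + 1]).get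
        (Fin.cast (by simp) i.castSucc : Fin (List.replicate n 1 ++ [m + 1]).length) = 1 := by
      intro i
      simp [List.getElem_append]
    have e2 : (List.replicate n 1 ++ [m + 1]).get
        (Fin.cast (by simp) (Fin.last n) : Fin (List.replicate n 1 ++ [m + 1]).length) = m + 1 := by
      simp [List.getElem_append]
    simp only [e1, e2, ENNReal.toReal_mul, ENNReal.toReal_prod, ENNReal.toReal_div]
    rw [ENNReal.toReal_ofReal (by positivity)]
    simp only [ENNReal.toReal_ofNat, ENNReal.toReal_natCast, pow_one, Finset.prod_div_distrib,
      Finset.prod_const, Finset.card_univ, Fintype.card_fin, one_pow, pow_succ]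
    field_simp
  · intro g
    refine ENNReal.mul_ne_top (ENNReal.prod_ne_top fun i _ => ?_)
      (ENNReal.mul_ne_top (by simp) ENNReal.ofReal_ne_top)
    have := g.2.2 i.castSucc
    refine ENNReal.div_ne_top (by simp) ?_
    have : 0 < g.1 i.castSucc := by
      rcases Nat.eq_zero_or_pos (i : ℕ) with h | h
      · simp [h] at this; omega
      · have := g.2.1 (show (0 : Fin (n+1)) < i.castSucc from by
          rw [Fin.lt_def]; simpa using h)
        omega
    exact_mod_cast this.ne'
end

section
/- Partial fraction identity in three variables: for every positive integer q and all real (or complex) numbers x, y, z such that x, y, z, x+z, y+z, x+y and x+y+z are all nonzero, 1/(x y z^q) = ∑_{j=0}^{q−1} [ ∑_{ν=0}^{q−j−1} 1/(z^{q−j−ν} (x+z)^{ν+1} (x+y+z)^{j+1}) + 1/(x (x+z)^{q−j} (x+y+z)^{j+1}) + ∑_{ν=0}^{q−j−1} 1/(z^{q−j−ν} (y+z)^{ν+1} (x+y+z)^{j+1}) + 1/(y (y+z)^{q−j} (x+y+z)^{j+1}) ] + 1/(x (x+y) (x+y+z)^q) + 1/(y (x+y) (x+y+z)^q). -/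
/-- Two-variable partial fractions. -/
theorem pf_two (n : ℕ) (x z w : ℝ) (hx : x ≠ 0) (hz : z ≠ 0) (hw : w ≠ 0) (h : w = x + z) :
    (∑ ν ∈ Finset.range n, 1 / (z ^ (n - ν) * w ^ (ν + 1))) + 1 / (x * w ^ n)
      = 1 / (x * z ^ n) := by
  induction n with
  | zero => simp
  | succ n ih =>
    have e : (∑ ν ∈ Finset.range n, 1 / (z ^ (n + 1 - ν) * w ^ (ν + 1)))
        = (1 / z) * ∑ ν ∈ Finset.range n, 1 / (z ^ (n - ν) * w ^ (ν + 1)) := by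
      rw [Finset.mul_sum]
      refine Finset.sum_congr rfl fun ν hν => ?_
      have hlt := Finset.mem_range.mp hν
      rw [show n + 1 - ν = (n - ν) + 1 by omega, pow_succ z]
      field_simp
    rw [Finset.sum_range_succ, e, eq_sub_of_add_eq ih, show n + 1 - n = 1 by omega]
    have hx' : x = w - z := by linarith
    field_simp
    rw [hx']
    ring

/-- Two-variable partial fractions, divided by a further factor. -/
theorem pf_two_div (n : ℕ) (x z w c : ℝ) (hx : x ≠ 0) (hz : z ≠ 0) (hw : w ≠ 0)
    (h : w = x + z) :
    (∑ ν ∈ Finset.range n, 1 / (z ^ (n - ν) * w ^ (ν + 1) * c)) + 1 / (x * w ^ n * c)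
      = 1 / (x * z ^ n * c) := by
  have k := congrArg (fun t => t / c) (pf_two n x z w hx hz hw h)
  simpa only [add_div, Finset.sum_div, div_div] using k

/-- **Lemma (partial fractions in three variables).** For `q ≥ 1` and real `x, y, z`
with `x, y, z, x+z, y+z, x+y, x+y+z` all nonzero:
`1/(x y z^q) = ∑_{j=0}^{q−1} [ ∑_{ν=0}^{q−j−1} 1/(z^{q−j−ν} (x+z)^{ν+1} (x+y+z)^{j+1})
  + 1/(x (x+z)^{q−j} (x+y+z)^{j+1})
  + ∑_{ν=0}^{q−j−1} 1/(z^{q−j−ν} (y+z)^{ν+1} (x+y+z)^{j+1})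
  + 1/(y (y+z)^{q−j} (x+y+z)^{j+1}) ]
  + 1/(x (x+y) (x+y+z)^q) + 1/(y (x+y) (x+y+z)^q)`. -/
theorem partial_fraction_three (q : ℕ) (hq : 1 ≤ q) (x y z : ℝ)
    (hx : x ≠ 0) (hy : y ≠ 0) (hz : z ≠ 0) (hxz : x + z ≠ 0) (hyz : y + z ≠ 0)
    (hxy : x + y ≠ 0) (hxyz : x + y + z ≠ 0) :
    1 / (x * y * z ^ q)
      = (∑ j ∈ Finset.range q,
          ((∑ ν ∈ Finset.range (q - j),
              1 / (z ^ (q - j - ν) * (x + z) ^ (ν + 1) * (x + y + z) ^ (j + 1)))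
            + 1 / (x * (x + z) ^ (q - j) * (x + y + z) ^ (j + 1))
            + (∑ ν ∈ Finset.range (q - j),
                1 / (z ^ (q - j - ν) * (y + z) ^ (ν + 1) * (x + y + z) ^ (j + 1)))
            + 1 / (y * (y + z) ^ (q - j) * (x + y + z) ^ (j + 1))))
        + 1 / (x * (x + y) * (x + y + z) ^ q)
        + 1 / (y * (x + y) * (x + y + z) ^ q) := by
  have e : ∀ j ∈ Finset.range q,
      ((∑ ν ∈ Finset.range (q - j),
              1 / (z ^ (q - j - ν) * (x + z) ^ (ν + 1) * (x + y + z) ^ (j + 1)))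
            + 1 / (x * (x + z) ^ (q - j) * (x + y + z) ^ (j + 1))
            + (∑ ν ∈ Finset.range (q - j),
                1 / (z ^ (q - j - ν) * (y + z) ^ (ν + 1) * (x + y + z) ^ (j + 1)))
            + 1 / (y * (y + z) ^ (q - j) * (x + y + z) ^ (j + 1)))
      = ((x + y) / (x * y)) * (1 / (z ^ (q - j) * (x + y + z) ^ (j + 1))) := by
    intro j _
    rw [pf_two_div _ x z (x + z) _ hx hz hxz rfl, add_assoc,
      pf_two_div _ y z (y + z) _ hy hz hyz rfl]
    field_simp
    ring
  rw [Finset.sum_congr rfl e, ← Finset.mul_sum,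
    eq_sub_of_add_eq (pf_two q (x + y) z (x + y + z) hxy hz hxyz rfl)]
  field_simp
  ring
end

section
/- Shuffle product of two single T-values: for integers j and k with 2 ≤ j ≤ k − 2, T(j) · T(k−j) = ∑_{ν=2}^{k−1} [ C(ν−1, j−1) + C(ν−1, k−j−1) ] · T(k−ν, ν), where C(n,k) denotes the binomial coefficient. -/
theorem pf_base (a b c : ℝ) (h : a * b = c * (a + b)) (m : ℕ) :
    a * b ^ (m + 1) = ∑ μ ∈ Finset.range (m + 1), b ^ (m + 1 - μ) * c ^ (μ + 1)
      + a * c ^ (m + 1) := by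
  induction m with
  | zero => simp; linarith
  | succ m ih =>
    have e : ∑ μ ∈ Finset.range (m + 1), b ^ (m + 1 + 1 - μ) * c ^ (μ + 1)
        = b * ∑ μ ∈ Finset.range (m + 1), b ^ (m + 1 - μ) * c ^ (μ + 1) := by
      rw [Finset.mul_sum]
      refine Finset.sum_congr rfl fun μ hμ => ?_
      have : μ < m + 1 := Finset.mem_range.mp hμ
      rw [show m + 1 + 1 - μ = (m + 1 - μ) + 1 by omega]
      ring
    rw [Finset.sum_range_succ, e, show m + 1 + 1 - (m + 1) = 1 by omega]
    have h1 : a * b ^ (m + 1 + 1) = b * (a * b ^ (m + 1)) := by ring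
    rw [h1, ih]
    linear_combination c ^ (m + 1) * h

theorem pf_zero (a b c : ℝ) (h : a * b = c * (a + b)) (m : ℕ) :
    a * b ^ (m + 1) = ∑ μ ∈ Finset.range (m + 1),
      ((μ.choose 0 : ℝ) * b ^ (m + 1 - μ) + (μ.choose m : ℝ) * a ^ (m + 1 - μ)) * c ^ (μ + 1) := by
  rw [pf_base a b c h m]
  simp only [add_mul, Finset.sum_add_distrib]
  congr 1
  · simp
  · rw [Finset.sum_range_succ, Finset.sum_eq_zero]
    · simp
    · intro μ hμ
      rw [Nat.choose_eq_zero_of_lt (Finset.mem_range.mp hμ)]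
      simp

theorem pf (n : ℕ) : ∀ (i m : ℕ) (a b c : ℝ), a * b = c * (a + b) → i + m = n →
    a ^ (i + 1) * b ^ (m + 1) = ∑ μ ∈ Finset.range (n + 1),
      ((μ.choose i : ℝ) * b ^ (n + 1 - μ) + (μ.choose m : ℝ) * a ^ (n + 1 - μ)) * c ^ (μ + 1) := by
  induction n with
  | zero =>
    intro i m a b c h hn
    obtain rfl : i = 0 := by omega
    obtain rfl : m = 0 := by omega
    simpa using pf_zero a b c h 0
  | succ n ih =>
    intro i m a b c h hn
    rcases i with _ | i
    · obtain rfl : m = n + 1 := by omega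
      simpa using pf_zero a b c h (n + 1)
    rcases m with _ | m
    · obtain rfl : i = n := by omega
      have := pf_zero b a c (by linarith) (i + 1)
      rw [zero_add, pow_one, mul_comm, this]
      refine Finset.sum_congr rfl fun μ _ => ?_
      ring
    have e : a ^ (i + 1 + 1) * b ^ (m + 1 + 1)
        = c * (a ^ (i + 1) * b ^ (m + 1 + 1) + a ^ (i + 1 + 1) * b ^ (m + 1)) := by
      linear_combination a ^ (i + 1) * b ^ (m + 1) * h
    rw [e, ih i (m + 1) a b c h (by omega), ih (i + 1) m a b c h (by omega),
      ← Finset.sum_add_distrib, Finset.mul_sum, Finset.sum_range_succ' _ (n + 1)]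
    simp only [Nat.choose_zero_succ, Nat.cast_zero, zero_mul, add_zero]
    refine Finset.sum_congr rfl fun μ _ => ?_
    rw [Nat.choose_succ_succ, Nat.choose_succ_succ, show n + 1 + 1 - (μ + 1) = n + 1 - μ by omega]
    push_cast
    ring

theorem MTV_one (j : ℕ) : MTV [j] = 2 * ∑' u : ℕ, 1 / ((2 * u + 1 : ℕ) : ℝ) ^ j := by
  unfold MTV
  let e : ℕ ≃ {f : Fin [j].length → ℕ // StrictMono f ∧ ∀ i, f i % 2 = ((i : ℕ) + 1) % 2} :=
    { toFun := fun u => ⟨fun _ => 2 * u + 1, by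
        refine ⟨?_, ?_⟩
        · intro a b hab
          have := a.2; have := b.2
          simp only [List.length_singleton] at *
          have : (a : ℕ) < b := hab
          omega
        · intro i
          have := i.2
          simp only [List.length_singleton] at *
          omega⟩
      invFun := fun f => f.1 ⟨0, by simp⟩ / 2
      left_inv := fun u => by
        show (2 * u + 1) / 2 = u
        omega
      right_inv := fun f => by
        apply Subtype.ext
        funext i
        have h0 : i = ⟨0, by simp⟩ := by
          apply Fin.ext
          have := i.2
          simp only [List.length_singleton] at *
          omega
        subst h0
        have := f.2.2 ⟨0, by simp⟩
        show 2 * (f.1 ⟨0, by simp⟩ / 2) + 1 = f.1 ⟨0, by simp⟩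
        simp only at this
        omega }
  rw [← e.tsum_eq]
  congr 1
  · simp
  refine tsum_congr fun u => ?_
  show ∏ i : Fin 1, _ = _
  rw [Fin.prod_univ_one]
  rfl

theorem MTV_two (a b : ℕ) : MTV [a, b] = 4 * ∑' x : ℕ × ℕ,
    1 / ((2 * x.1 + 1 : ℕ) : ℝ) ^ a * (1 / ((2 * x.1 + 2 * x.2 + 2 : ℕ) : ℝ) ^ b) := by
  unfold MTV
  let e : ℕ × ℕ ≃ {f : Fin [a, b].length → ℕ // StrictMono f ∧ ∀ i, f i % 2 = ((i : ℕ) + 1) % 2} :=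
    { toFun := fun u => ⟨(![2 * u.1 + 1, 2 * u.1 + 2 * u.2 + 2] : Fin 2 → ℕ), by
        refine ⟨?_, ?_⟩
        · show StrictMono (![2 * u.1 + 1, 2 * u.1 + 2 * u.2 + 2] : Fin 2 → ℕ)
          rw [Fin.strictMono_iff_lt_succ]
          intro i
          fin_cases i
          simp
        · show ∀ i : Fin 2, (![2 * u.1 + 1, 2 * u.1 + 2 * u.2 + 2] : Fin 2 → ℕ) i % 2 = _
          intro i
          fin_cases i
          · simp
          · simp⟩
      invFun := fun f => (f.1 (0 : Fin 2) / 2, (f.1 (1 : Fin 2) - f.1 (0 : Fin 2)) / 2)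
      left_inv := fun u => by
        show ((2 * u.1 + 1) / 2, (2 * u.1 + 2 * u.2 + 2 - (2 * u.1 + 1)) / 2) = u
        ext
        · simp; omega
        · simp; omega
      right_inv := fun f => by
        apply Subtype.ext
        have h0 : f.1 (0 : Fin 2) % 2 = 1 := f.2.2 (0 : Fin 2)
        have h1 : f.1 (1 : Fin 2) % 2 = (1 + 1) % 2 := f.2.2 (1 : Fin 2)
        have h2 : f.1 (0 : Fin 2) < f.1 (1 : Fin 2) := 
          f.2.1 (show (0 : Fin 2) < (1 : Fin 2) by decide)
        refine funext fun (i : Fin 2) => ?_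
        fin_cases i
        · show 2 * (f.1 (0 : Fin 2) / 2) + 1 = f.1 (0 : Fin 2)
          omega
        · show 2 * (f.1 (0 : Fin 2) / 2) + 2 * ((f.1 (1 : Fin 2) - f.1 (0 : Fin 2)) / 2) + 2
            = f.1 (1 : Fin 2)
          omega }
  rw [← e.tsum_eq]
  congr 1
  · norm_num
  refine tsum_congr fun u => ?_
  show ∏ i : Fin 2, _ = _
  rw [Fin.prod_univ_two]
  rfl

theorem summable_odd_rpow (s : ℝ) (hs : 1 < s) :
    Summable fun u : ℕ => 1 / ((2 * u + 1 : ℕ) : ℝ) ^ s :=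
  (Real.summable_one_div_nat_rpow.mpr hs).comp_injective
    (i := fun u : ℕ => 2 * u + 1) (fun a b h => by simp only at h; omega)

theorem summable_odd_pow (s : ℕ) (hs : 1 < s) :
    Summable fun u : ℕ => 1 / ((2 * u + 1 : ℕ) : ℝ) ^ s :=
  (Real.summable_one_div_nat_pow.mpr hs).comp_injective
    (i := fun u : ℕ => 2 * u + 1) (fun a b h => by simp only at h; omega)

theorem summable_two (a b : ℕ) (ha : 1 ≤ a) (hb : 2 ≤ b) : Summable fun x : ℕ × ℕ =>
    1 / ((2 * x.1 + 1 : ℕ) : ℝ) ^ a * (1 / ((2 * x.1 + 2 * x.2 + 2 : ℕ) : ℝ) ^ b) := by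
  have hs := summable_odd_rpow (3 / 2) (by norm_num)
  have h := hs.mul_of_nonneg hs (fun _ => by positivity) (fun _ => by positivity)
  refine Summable.of_nonneg_of_le (fun _ => by positivity) (fun x => ?_) h
  rw [div_mul_div_comm, div_mul_div_comm]
  refine div_le_div_of_nonneg_left (by norm_num) (by positivity) ?_
  have hp : (1 : ℝ) ≤ ((2 * x.1 + 1 : ℕ) : ℝ) := by exact_mod_cast (by omega)
  have hq : (1 : ℝ) ≤ ((2 * x.2 + 1 : ℕ) : ℝ) := by exact_mod_cast (by omega)
  have hr : ((2 * x.1 + 2 * x.2 + 2 : ℕ) : ℝ)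
    = ((2 * x.1 + 1 : ℕ) : ℝ) + ((2 * x.2 + 1 : ℕ) : ℝ) := by push_cast; ring
  rw [hr]
  generalize ((2 * x.1 + 1 : ℕ) : ℝ) = p at *
  generalize ((2 * x.2 + 1 : ℕ) : ℝ) = q at *
  have e1 : p ^ (3 / 2 : ℝ) = p * p ^ (1 / 2 : ℝ) := by
    rw [← Real.rpow_one_add' (by linarith) (by norm_num)]; norm_num
  have e2 : (p + q) ^ 2 = (p + q) ^ (1 / 2 : ℝ) * (p + q) ^ (3 / 2 : ℝ) := by
    rw [← Real.rpow_add (by linarith), ← Real.rpow_natCast]; norm_num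
  calc p ^ (3 / 2 : ℝ) * q ^ (3 / 2 : ℝ) = p * (p ^ (1 / 2 : ℝ) * q ^ (3 / 2 : ℝ)) := by
        rw [e1]; ring
    _ ≤ p * ((p + q) ^ (1 / 2 : ℝ) * (p + q) ^ (3 / 2 : ℝ)) := by
        gcongr <;> linarith
    _ = p ^ 1 * (p + q) ^ 2 := by rw [e2, pow_one]
    _ ≤ p ^ a * (p + q) ^ b := by
        have : 1 ≤ p + q := by linarith
        gcongr

theorem MTV_shuffle_single (j k : ℕ) (hj : 2 ≤ j) (hk : j ≤ k - 2) :
    MTV [j] * MTV [k - j]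
      = ∑ ν ∈ Finset.Icc 2 (k - 1),
          (((ν - 1).choose (j - 1) : ℝ) + ((ν - 1).choose (k - j - 1) : ℝ))
            * MTV [k - ν, ν] := by
  have h1 := summable_odd_pow j (by omega)
  have h2 := summable_odd_pow (k - j) (by omega)
  have h12 := h1.mul_of_nonneg h2 (fun _ => by positivity) (fun _ => by positivity)
  set G : ℕ → ℕ × ℕ → ℝ := fun ν x =>
    1 / ((2 * x.1 + 1 : ℕ) : ℝ) ^ (k - ν) * (1 / ((2 * x.1 + 2 * x.2 + 2 : ℕ) : ℝ) ^ ν) with hG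
  have hGs : ∀ ν ∈ Finset.Icc 2 (k - 1), Summable (G ν) := by
    intro ν hν
    rw [Finset.mem_Icc] at hν
    exact summable_two _ _ (by omega) (by omega)
  have hGs' : ∀ ν ∈ Finset.Icc 2 (k - 1), Summable fun x : ℕ × ℕ => G ν x.swap :=
    fun ν hν => (Equiv.prodComm ℕ ℕ).summable_iff.mpr (hGs ν hν)
  have key : ∀ x : ℕ × ℕ,
      1 / ((2 * x.1 + 1 : ℕ) : ℝ) ^ j * (1 / ((2 * x.2 + 1 : ℕ) : ℝ) ^ (k - j))
      = ∑ ν ∈ Finset.Icc 2 (k - 1), (((ν - 1).choose (j - 1) : ℝ) * G ν x.swap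
          + ((ν - 1).choose (k - j - 1) : ℝ) * G ν x) := by
    intro x
    have hp : (0 : ℝ) < ((2 * x.1 + 1 : ℕ) : ℝ) := by positivity
    have hq : (0 : ℝ) < ((2 * x.2 + 1 : ℕ) : ℝ) := by positivity
    have hr : ((2 * x.1 + 2 * x.2 + 2 : ℕ) : ℝ)
      = ((2 * x.1 + 1 : ℕ) : ℝ) + ((2 * x.2 + 1 : ℕ) : ℝ) := by push_cast; ring
    have hr' : ((2 * x.2 + 2 * x.1 + 2 : ℕ) : ℝ)
      = ((2 * x.1 + 1 : ℕ) : ℝ) + ((2 * x.2 + 1 : ℕ) : ℝ) := by push_cast; ring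
    simp only [hG, Prod.fst_swap, Prod.snd_swap, hr, hr', ← one_div_pow]
    generalize ((2 * x.1 + 1 : ℕ) : ℝ) = p at *
    generalize ((2 * x.2 + 1 : ℕ) : ℝ) = q at *
    have h := pf (k - 2) (j - 1) (k - j - 1) (1 / p) (1 / q) (1 / (p + q))
      (by field_simp; ring) (by omega)
    rw [show j - 1 + 1 = j by omega, show k - j - 1 + 1 = k - j by omega] at h
    rw [h, Finset.sum_range_succ', Nat.choose_eq_zero_of_lt (show 0 < j - 1 by omega),
      Nat.choose_eq_zero_of_lt (show 0 < k - j - 1 by omega), ← Finset.Ico_add_one_right_eq_Icc,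
      Finset.sum_Ico_eq_sum_range]
    simp only [Nat.cast_zero, zero_mul, add_zero]
    rw [show k - 1 + 1 - 2 = k - 2 by omega]
    refine Finset.sum_congr rfl fun μ hμ => ?_
    rw [show 2 + μ - 1 = μ + 1 by omega, show k - (2 + μ) = k - 2 + 1 - (μ + 1) by
      have := Finset.mem_range.mp hμ
      omega, show 2 + μ = μ + 1 + 1 by omega]
    ring
  rw [MTV_one, MTV_one]
  have step : (∑' u : ℕ, 1 / ((2 * u + 1 : ℕ) : ℝ) ^ j)
      * (∑' u : ℕ, 1 / ((2 * u + 1 : ℕ) : ℝ) ^ (k - j))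
      = ∑ ν ∈ Finset.Icc 2 (k - 1), (((ν - 1).choose (j - 1) : ℝ)
          + ((ν - 1).choose (k - j - 1) : ℝ)) * ∑' x, G ν x := by
    rw [h1.tsum_mul_tsum h2 h12, tsum_congr key, Summable.tsum_finsetSum]
    · refine Finset.sum_congr rfl fun ν hν => ?_
      rw [Summable.tsum_add ((hGs' ν hν).mul_left _) ((hGs ν hν).mul_left _), tsum_mul_left,
        tsum_mul_left, show ∑' x : ℕ × ℕ, G ν x.swap = ∑' x, G ν x from
          (Equiv.prodComm ℕ ℕ).tsum_eq (G ν)]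
      ring
    · exact fun ν hν => ((hGs' ν hν).mul_left _).add ((hGs ν hν).mul_left _)
  rw [mul_mul_mul_comm, step, Finset.mul_sum]
  refine Finset.sum_congr rfl fun ν _ => ?_
  rw [MTV_two]
  ring
end

section
/- For every integer k ≥ 3, 4 ζ^{eo}(1, k−1) = (k−1) T(k) − (2 log 2) T(k−1) − (1/2) ∑_{j=2}^{k−2} T(j) T(k−j), where ζ^{eo}(1, k−1) := ∑_{0<n<m, n even, m odd} 1/(n · m^{k−1}). -/
/-- The even-odd double zeta value
`ζ^{eo}(1, k−1) := ∑_{0<n<m, n even, m odd} 1/(n · m^{k−1})`. -/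
noncomputable def zetaEO (k : ℕ) : ℝ :=
  ∑' p : {p : ℕ × ℕ // 0 < p.1 ∧ p.1 < p.2 ∧ p.1 % 2 = 0 ∧ p.2 % 2 = 1},
    1 / ((p.1.1 : ℝ) * (p.1.2 : ℝ) ^ (k - 1))


open Filter Topology

noncomputable def xo (a : ℕ) : ℝ := 1 / (2 * (a : ℝ) + 1)

noncomputable def Ee (a : ℕ) : ℝ := ∑ i ∈ Finset.range a, 1 / (2 * ((i : ℝ) + 1))

noncomputable def Gk (a b : ℕ) : ℝ :=
  if a = b then 0 else 1 / ((2 * (b : ℝ) + 1) * (2 * (b : ℝ) - 2 * (a : ℝ)))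

lemma xo_pos (a : ℕ) : 0 < xo a := by unfold xo; positivity

lemma xo_le_one (a : ℕ) : xo a ≤ 1 := by
  unfold xo; rw [div_le_one (by positivity)]; linarith [(Nat.cast_nonneg a : (0:ℝ) ≤ a)]

lemma MTV_single (j : ℕ) : MTV [j] = 2 * ∑' a, xo a ^ j := by
  unfold MTV
  have hlen : ([j] : List ℕ).length = 1 := rfl
  simp only [hlen, pow_one]
  congr 1
  let e : ℕ ≃ {f : Fin ([j] : List ℕ).length → ℕ // StrictMono f ∧ ∀ i, f i % 2 = ((i : ℕ) + 1) % 2} :=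
    { toFun := fun a => ⟨fun _ => 2 * a + 1, by
        refine ⟨fun i l h => absurd h ?_, fun i => ?_⟩
        · have h1 := i.2; have h2 := l.2
          simp only [hlen] at h1 h2
          rw [Fin.lt_def]; omega
        · have h1 := i.2
          simp only [hlen] at h1
          change (2 * a + 1) % 2 = _
          omega⟩
      invFun := fun f => f.1 ⟨0, by simp⟩ / 2
      left_inv := fun a => by simp only; omega
      right_inv := fun f => by
        apply Subtype.ext
        funext i
        have h1 := i.2
        simp only [hlen] at h1
        have h2 := f.2.2 i
        have h3 : i = ⟨0, by simp⟩ := by apply Fin.ext; simp only; omega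
        rw [h3] at h2 ⊢
        simp only at h2 ⊢
        omega }
  rw [← e.tsum_eq]
  apply tsum_congr
  intro a
  rw [show (∏ i : Fin ([j] : List ℕ).length, (1 : ℝ) / ((e a).1 i : ℝ) ^ ([j] : List ℕ).get i)
    = (1 : ℝ) / ((e a).1 ⟨0, by simp⟩ : ℝ) ^ j from Fin.prod_univ_one _]
  simp [e, xo]

lemma summable_xo (j : ℕ) (hj : 2 ≤ j) : Summable fun a => xo a ^ j := by
  have h1 : Summable fun a : ℕ => (1 : ℝ) / ((a + 1 : ℕ) : ℝ) ^ j :=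
    (summable_nat_add_iff 1).2 (Real.summable_one_div_nat_pow.2 (by omega))
  refine Summable.of_nonneg_of_le (fun a => pow_nonneg (xo_pos a).le _) (fun a => ?_) h1
  rw [← one_div_pow]
  apply pow_le_pow_left₀ (xo_pos a).le
  unfold xo
  push_cast
  apply one_div_le_one_div_of_le (by positivity)
  linarith [(Nat.cast_nonneg a : (0:ℝ) ≤ a)]

/-- the symmetric kernel restricted to `a < b` -/
noncomputable def Kl (p : ℕ × ℕ) : ℝ :=
  if p.1 < p.2 then xo p.1 * xo p.2 / (2 * (p.2 : ℝ) - 2 * (p.1 : ℝ)) else 0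

lemma summable_Kl : Summable Kl := by
  let i : ℕ × ℕ → ℕ × ℕ := fun q => (q.1, q.1 + q.2 + 1)
  have hi : Function.Injective i := by
    rintro ⟨a, b⟩ ⟨c, d⟩ h
    simp only [i, Prod.mk.injEq] at h ⊢
    omega
  rw [← hi.summable_iff]
  · have h0 : Summable fun a : ℕ => (1 : ℝ) / ((a + 1 : ℕ) : ℝ) ^ (3 / 2 : ℝ) :=
      (summable_nat_add_iff 1).2 (Real.summable_one_div_nat_rpow.2 (by norm_num))
    have h1 := h0.mul_of_nonneg h0 (fun a => by positivity) (fun a => by positivity)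
    refine Summable.of_nonneg_of_le (fun q => ?_) (fun q => ?_) h1
    · simp only [Function.comp, i, Kl]
      rw [if_pos (by omega)]
      push_cast
      have := (xo_pos q.1).le
      have := (xo_pos (q.1 + q.2 + 1)).le
      have : (0:ℝ) ≤ 2 * ((q.1:ℝ) + q.2 + 1) - 2 * q.1 := by ring_nf; positivity
      positivity
    · obtain ⟨a, d⟩ := q
      simp only [Function.comp, i, Kl]
      rw [if_pos (by omega)]
      unfold xo
      push_cast
      have ha : (0:ℝ) < (a:ℝ) + 1 := by positivity
      have hd : (0:ℝ) < (d:ℝ) + 1 := by positivity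
      have e1 : ∀ t : ℝ, 0 < t → t ^ (3 / 2 : ℝ) = t * Real.sqrt t := by
        intro t ht
        rw [show (3 / 2 : ℝ) = 1 + 1 / 2 by norm_num, Real.rpow_add ht, Real.rpow_one,
          ← Real.sqrt_eq_rpow]
      rw [e1 _ ha, e1 _ hd]
      set s := Real.sqrt ((a:ℝ) + 1) with hs
      set u := Real.sqrt ((d:ℝ) + 1) with hu
      have hs0 : 0 < s := Real.sqrt_pos.2 ha
      have hu0 : 0 < u := Real.sqrt_pos.2 hd
      have hs2 : s * s = (a:ℝ) + 1 := Real.mul_self_sqrt ha.le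
      have hu2 : u * u = (d:ℝ) + 1 := Real.mul_self_sqrt hd.le
      rw [one_div_mul_one_div, one_div_mul_one_div, div_div]
      apply one_div_le_one_div_of_le (by positivity)
      have h3 : s * u ≤ 2 * ((a:ℝ) + d + 1) + 1 := by
        nlinarith [sq_nonneg (s - u), (Nat.cast_nonneg a : (0:ℝ) ≤ a), (Nat.cast_nonneg d : (0:ℝ) ≤ d)]
      have h4 : (a:ℝ) + 1 ≤ 2 * a + 1 := by linarith [(Nat.cast_nonneg a : (0:ℝ) ≤ a)]
      have h5 : (d:ℝ) + 1 ≤ 2 * ((a:ℝ) + d + 1) - 2 * a := by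
        linarith [(Nat.cast_nonneg d : (0:ℝ) ≤ d)]
      calc ((a:ℝ) + 1) * s * (((d:ℝ) + 1) * u) = ((a:ℝ) + 1) * (s * u) * ((d:ℝ) + 1) := by ring
        _ ≤ _ := by gcongr
  · rintro ⟨a, b⟩ h
    simp only [Kl]
    rw [if_neg]
    intro hab
    apply h
    exact ⟨(a, b - a - 1), Prod.ext rfl (by change a + (b - a - 1) + 1 = b; change a < b at hab; omega)⟩

lemma summable_F (k : ℕ) (hk : 3 ≤ k) :
    Summable fun p : ℕ × ℕ => xo p.1 ^ (k - 2) * Gk p.1 p.2 := by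
  have hsw : Summable fun p : ℕ × ℕ => Kl p.swap :=
    ((Equiv.prodComm ℕ ℕ).summable_iff (f := Kl)).2 summable_Kl
  refine Summable.of_norm_bounded (summable_Kl.add hsw) ?_
  rintro ⟨a, b⟩
  have hx : xo a ^ (k - 2) ≤ xo a := by
    calc xo a ^ (k - 2) ≤ xo a ^ 1 := pow_le_pow_of_le_one (xo_pos a).le (xo_le_one a) (by omega)
      _ = _ := pow_one _
  rw [norm_mul, Real.norm_eq_abs, abs_of_nonneg (pow_nonneg (xo_pos a).le _)]
  refine (mul_le_mul_of_nonneg_right hx (norm_nonneg _)).trans ?_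
  simp only [Kl, Gk, Prod.swap]
  rcases lt_trichotomy a b with h | h | h
  · have h' : (a : ℝ) < b := by exact_mod_cast h
    rw [if_neg h.ne, if_pos h, if_neg (by omega)]
    have : (0:ℝ) < 2 * b - 2 * a := by linarith
    rw [Real.norm_eq_abs, abs_of_pos (by positivity)]
    apply le_of_eq
    simp only [xo]
    field_simp
    ring
  · simp [h]
  · have h' : (b : ℝ) < a := by exact_mod_cast h
    rw [if_neg h.ne', if_pos h, if_neg (by omega)]
    have : (0:ℝ) < 2 * a - 2 * b := by linarith
    rw [show (2 * (b:ℝ) + 1) * (2 * b - 2 * a) = - ((2 * (b:ℝ) + 1) * (2 * a - 2 * b)) by ring,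
      div_neg, norm_neg,
      Real.norm_eq_abs, abs_of_pos (by positivity)]
    apply le_of_eq
    simp only [xo]
    field_simp
    ring

lemma Ee_eq (n : ℕ) : Ee n = (harmonic n : ℝ) / 2 := by
  unfold Ee harmonic
  push_cast
  rw [Finset.sum_div]
  apply Finset.sum_congr rfl
  intro i _
  field_simp

lemma sum_xo (n : ℕ) : ∑ b ∈ Finset.range n, xo b = (harmonic (2 * n) : ℝ) - (harmonic n : ℝ) / 2 := by
  induction n with
  | zero => simp
  | succ n ih =>
    rw [Finset.sum_range_succ, ih, show 2 * (n + 1) = 2 * n + 1 + 1 by ring, harmonic_succ,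
      harmonic_succ, harmonic_succ]
    push_cast
    unfold xo
    field_simp
    ring

lemma tendsto_base :
    Tendsto (fun n : ℕ => (harmonic n : ℝ) / 2 - ∑ b ∈ Finset.range n, xo b) atTop
      (𝓝 (-Real.log 2)) := by
  have h1 := Real.tendsto_harmonic_sub_log
  have h2 : Tendsto (fun n : ℕ => 2 * n) atTop atTop := tendsto_id.const_mul_atTop' (by norm_num)
  have h3 := (h1.sub (h1.comp h2)).sub_const (Real.log 2)
  rw [sub_self, zero_sub] at h3
  refine h3.congr' ?_
  filter_upwards [eventually_gt_atTop 0] with n hn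
  rw [sum_xo]
  simp only [Function.comp]
  have : (n:ℝ) ≠ 0 := by positivity
  push_cast
  rw [Real.log_mul (by norm_num) this]
  ring

lemma tendsto_xo : Tendsto xo atTop (𝓝 0) := by
  have h : Tendsto (fun a : ℕ => 2 * (a:ℝ) + 1) atTop atTop :=
    tendsto_atTop_add_const_right _ _ (tendsto_natCast_atTop_atTop.const_mul_atTop (by norm_num))
  exact h.const_div_atTop 1

lemma tendsto_shift (a : ℕ) :
    Tendsto (fun n : ℕ => (harmonic n : ℝ) / 2 - ∑ b ∈ Finset.range (n + a), xo b) atTop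
      (𝓝 (-Real.log 2)) := by
  induction a with
  | zero => simpa using tendsto_base
  | succ a ih =>
    have h := ih.sub (tendsto_xo.comp (tendsto_add_atTop_nat a))
    rw [sub_zero] at h
    refine h.congr fun n => ?_
    rw [← add_assoc, Finset.sum_range_succ]
    simp only [Function.comp]
    ring

lemma finite_id (a n : ℕ) : ∑ b ∈ Finset.range (n + (a + 1)), Gk a b =
    xo a * (((harmonic n : ℝ) / 2 - ∑ b ∈ Finset.range (n + (a + 1)), xo b) + xo a - Ee a) := by
  have hg : ∀ b, a ≠ b → Gk a b = xo a * (1 / (2 * (b : ℝ) - 2 * (a : ℝ)) - xo b) := by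
    intro b hb
    have : (b : ℝ) - a ≠ 0 := by
      rw [sub_ne_zero]; exact_mod_cast hb.symm
    have h2 : 2 * (b : ℝ) - 2 * a ≠ 0 := by
      rw [← mul_sub]; positivity
    simp only [Gk, if_neg hb, xo]
    field_simp
    ring
  induction n with
  | zero =>
    rw [zero_add, Finset.sum_range_succ, Finset.sum_range_succ]
    have h1 : ∑ b ∈ Finset.range a, Gk a b
        = ∑ b ∈ Finset.range a, xo a * (1 / (2 * (b : ℝ) - 2 * (a : ℝ)) - xo b) := by
      apply Finset.sum_congr rfl
      intro b hb
      exact hg b (by have := Finset.mem_range.1 hb; omega)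
    have h2 : ∑ b ∈ Finset.range a, 1 / (2 * (b : ℝ) - 2 * (a : ℝ)) = - Ee a := by
      unfold Ee
      rw [← Finset.sum_range_reflect, ← Finset.sum_neg_distrib]
      apply Finset.sum_congr rfl
      intro b hb
      have hb := Finset.mem_range.1 hb
      have : ((a - 1 - b : ℕ) : ℝ) = a - 1 - b := by
        rw [Nat.cast_sub (by omega), Nat.cast_sub (by omega)]; simp
      rw [this, ← div_neg]
      congr 1
      ring
    rw [h1, ← Finset.mul_sum, Finset.sum_sub_distrib, h2]
    rw [show Gk a a = 0 by simp [Gk], harmonic_zero]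
    push_cast
    ring
  | succ n ih =>
    rw [show n + 1 + (a + 1) = n + (a + 1) + 1 by ring, Finset.sum_range_succ, ih,
      Finset.sum_range_succ, hg _ (by omega), harmonic_succ]
    push_cast
    rw [show 2 * ((n:ℝ) + (a + 1)) - 2 * a = 2 * (n + 1) by ring, one_div, mul_inv]
    ring

lemma hasSum_G (a : ℕ) : HasSum (Gk a) (xo a * (-Real.log 2 + xo a - Ee a)) := by
  have h1 : Summable (Gk a) := by
    have := (summable_F 3 le_rfl).prod_factor a
    simpa [summable_mul_left_iff (xo_pos a).ne'] using this
  have h2 := h1.hasSum.tendsto_sum_nat.comp (tendsto_add_atTop_nat (a + 1))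
  have h3 := (((tendsto_shift (a + 1)).add_const (xo a)).sub_const (Ee a)).const_mul (xo a)
  have h4 := tendsto_nhds_unique h2 (h3.congr fun n => (finite_id a n).symm)
  rw [← h4]
  exact h1.hasSum

lemma hasSum_F (k : ℕ) (hk : 3 ≤ k) :
    HasSum (fun a => xo a ^ (k - 2) * (xo a * (-Real.log 2 + xo a - Ee a)))
      (∑' p : ℕ × ℕ, xo p.1 ^ (k - 2) * Gk p.1 p.2) :=
  (summable_F k hk).hasSum.prod_fiberwise fun a => (hasSum_G a).mul_left _

lemma hasSum_E (k : ℕ) (hk : 3 ≤ k) :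
    HasSum (fun a => xo a ^ (k - 1) * Ee a)
      (-Real.log 2 * (∑' a, xo a ^ (k - 1)) + (∑' a, xo a ^ k)
        - ∑' p : ℕ × ℕ, xo p.1 ^ (k - 2) * Gk p.1 p.2) := by
  have h := (((summable_xo (k - 1) (by omega)).hasSum.mul_left (-Real.log 2)).add
    (summable_xo k (by omega)).hasSum).sub (hasSum_F k hk)
  refine h.congr_fun ?_ 
  intro a
  obtain ⟨l, rfl⟩ : ∃ l, k = l + 3 := ⟨k - 3, by omega⟩
  rw [show l + 3 - 1 = l + 2 by omega, show l + 3 - 2 = l + 1 by omega]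
  ring

lemma zetaEO_eq (k : ℕ) (hk : 3 ≤ k) : zetaEO k = ∑' a, xo a ^ (k - 1) * Ee a := by
  let e : (Σ a : ℕ, Fin a) ≃ {p : ℕ × ℕ // 0 < p.1 ∧ p.1 < p.2 ∧ p.1 % 2 = 0 ∧ p.2 % 2 = 1} :=
    { toFun := fun s => ⟨(2 * (s.2.1 + 1), 2 * s.1 + 1), by
        have := s.2.2
        simp only
        omega⟩
      invFun := fun p => ⟨p.1.2 / 2, ⟨p.1.1 / 2 - 1, by have := p.2; omega⟩⟩
      left_inv := by
        rintro ⟨a, i, hi⟩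
        have h1 : (2 * a + 1) / 2 = a := by omega
        have h2 : 2 * (i + 1) / 2 - 1 = i := by omega
        simp only
        congr 1
        · rw [Fin.heq_ext_iff h1]
          exact h2
      right_inv := by
        rintro ⟨⟨n, m⟩, h⟩
        simp only at h
        apply Subtype.ext
        simp only [Prod.mk.injEq]
        omega }
  unfold zetaEO
  rw [← e.tsum_eq]
  have hterm : ∀ s : (Σ a : ℕ, Fin a), (1 : ℝ) / (((e s).1.1 : ℝ) * ((e s).1.2 : ℝ) ^ (k - 1))
      = xo s.1 ^ (k - 1) * (1 / (2 * ((s.2.1 : ℝ) + 1))) := by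
    intro s
    simp only [e, xo, Equiv.coe_fn_mk]
    push_cast
    rw [one_div_pow, one_div_mul_one_div, mul_comm]
  simp only [hterm]
  have hfib : ∀ a : ℕ, HasSum (fun i : Fin a => xo a ^ (k - 1) * (1 / (2 * ((i.1 : ℝ) + 1))))
      (xo a ^ (k - 1) * Ee a) := by
    intro a
    have := hasSum_fintype (fun i : Fin a => xo a ^ (k - 1) * (1 / (2 * ((i.1 : ℝ) + 1))))
    rwa [← Finset.mul_sum, Fin.sum_univ_eq_sum_range (fun i => 1 / (2 * ((i : ℝ) + 1)))] at this
  have hs : Summable fun s : (Σ a : ℕ, Fin a) => xo s.1 ^ (k - 1) * (1 / (2 * ((s.2.1 : ℝ) + 1))) := by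
    rw [summable_sigma_of_nonneg]
    · refine ⟨fun a => (hfib a).summable, ?_⟩
      simp only [fun a => (hfib a).tsum_eq]
      exact (hasSum_E k hk).summable
    · intro s
      have := (xo_pos s.1).le
      positivity
  exact (hs.hasSum.sigma hfib).tsum_eq.symm

lemma geom_id (k : ℕ) (hk : 3 ≤ k) (a b : ℕ) :
    ∑ j ∈ Finset.Icc 2 (k - 2), xo a ^ j * xo b ^ (k - j) =
      (if a = b then ((k : ℝ) - 3) * xo a ^ k else 0)
        + (xo a ^ (k - 2) * Gk a b + xo b ^ (k - 2) * Gk b a) := by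
  by_cases h : a = b
  · subst h
    have : ∀ j ∈ Finset.Icc 2 (k - 2), xo a ^ j * xo a ^ (k - j) = xo a ^ k := by
      intro j hj
      have := Finset.mem_Icc.1 hj
      rw [← pow_add]
      congr 1
      omega
    rw [Finset.sum_congr rfl this]
    simp [Gk]
    left
    obtain ⟨l, rfl⟩ : ∃ l, k = l + 3 := ⟨k - 3, by omega⟩
    rw [show l + 3 - 2 - 1 = l by omega]
    push_cast
    ring
  · rw [if_neg h, zero_add]
    obtain ⟨l, rfl⟩ : ∃ l, k = l + 3 := ⟨k - 3, by omega⟩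
    have hba : (b : ℝ) - a ≠ 0 := by
      rw [sub_ne_zero]; exact_mod_cast Ne.symm h
    have hg1 : Gk a b = xo b / (2 * ((b : ℝ) - a)) := by
      simp only [Gk, if_neg h, xo]
      rw [← mul_sub, div_div]
    have hg2 : Gk b a = - (xo a / (2 * ((b : ℝ) - a))) := by
      simp only [Gk, if_neg (Ne.symm h), xo]
      rw [← mul_sub, div_div, ← div_neg]
      congr 1
      ring
    have hx : xo a - xo b = 2 * ((b : ℝ) - a) * (xo a * xo b) := by
      unfold xo
      field_simp
      ring
    rw [show l + 3 - 2 = l + 1 by omega, hg1, hg2]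
    have hsum : ∑ j ∈ Finset.Icc 2 (l + 1), xo a ^ j * xo b ^ (l + 3 - j)
        = xo a ^ 2 * xo b ^ 3 * ∑ i ∈ Finset.range l, xo a ^ i * xo b ^ (l - 1 - i) * (1 / xo b) := by
      rw [show Finset.Icc 2 (l + 1) = Finset.Ico 2 (l + 2) by ext; simp; omega,
        Finset.sum_Ico_eq_sum_range, Finset.mul_sum]
      apply Finset.sum_congr (by congr 1)
      intro i hi
      have hi := Finset.mem_range.1 hi
      rw [show l + 3 - (2 + i) = (l - 1 - i) + 2 by omega]
      have := (xo_pos b).ne'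
      field_simp
      ring
    have hgs := (Commute.all (xo a) (xo b)).geom_sum₂_mul l
    have hxb := (xo_pos b).ne'
    have hxa := (xo_pos a).ne'
    rw [hsum, ← Finset.sum_mul]
    set S := ∑ i ∈ Finset.range l, xo a ^ i * xo b ^ (l - 1 - i)
    rw [hx] at hgs
    have e1 : xo a ^ (l + 1) * (xo b / (2 * ((b : ℝ) - a))) + xo b ^ (l + 1) * -(xo a / (2 * ((b : ℝ) - a)))
        = xo a * xo b * (xo a ^ l - xo b ^ l) / (2 * ((b : ℝ) - a)) := by ring
    rw [e1, ← hgs]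
    field_simp

/-- **Lemma.** For every integer `k ≥ 3`,
`4 ζ^{eo}(1, k−1) = (k−1) T(k) − (2 log 2) T(k−1) − (1/2) ∑_{j=2}^{k−2} T(j) T(k−j)`. -/
theorem four_zetaEO (k : ℕ) (hk : 3 ≤ k) :
    4 * zetaEO k
      = ((k : ℝ) - 1) * MTV [k] - (2 * Real.log 2) * MTV [k - 1]
        - (1 / 2) * ∑ j ∈ Finset.Icc 2 (k - 2), MTV [j] * MTV [k - j] := by
  have hF := (summable_F k hk).hasSum
  have hF' : HasSum (fun p : ℕ × ℕ => xo p.2 ^ (k - 2) * Gk p.2 p.1)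
      (∑' p : ℕ × ℕ, xo p.1 ^ (k - 2) * Gk p.1 p.2) :=
    ((Equiv.prodComm ℕ ℕ).hasSum_iff (f := fun p : ℕ × ℕ => xo p.1 ^ (k - 2) * Gk p.1 p.2)).2 hF
  have hD : HasSum (fun p : ℕ × ℕ => if p.1 = p.2 then ((k : ℝ) - 3) * xo p.1 ^ k else 0)
      (((k : ℝ) - 3) * ∑' a, xo a ^ k) := by
    have hi : Function.Injective (fun a : ℕ => (a, a)) := fun a b h => (Prod.mk.inj h).1
    rw [← hi.hasSum_iff]
    · simpa [Function.comp_def] using (summable_xo k (by omega)).hasSum.mul_left ((k : ℝ) - 3)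
    · rintro ⟨a, b⟩ h
      rw [if_neg]
      intro hab
      exact h ⟨a, by simp only at hab; simp [hab]⟩
  have hR := hD.add (hF.add hF')
  have hL : HasSum (fun p : ℕ × ℕ => ∑ j ∈ Finset.Icc 2 (k - 2), xo p.1 ^ j * xo p.2 ^ (k - j))
      (∑ j ∈ Finset.Icc 2 (k - 2), (∑' a, xo a ^ j) * ∑' a, xo a ^ (k - j)) := by
    apply hasSum_sum
    intro j hj
    have hj := Finset.mem_Icc.1 hj
    have s1 := summable_xo j hj.1
    have s2 := summable_xo (k - j) (by omega)
    have s3 : Summable fun p : ℕ × ℕ => xo p.1 ^ j * xo p.2 ^ (k - j) :=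
      Summable.mul_of_nonneg (f := fun a => xo a ^ j) (g := fun a => xo a ^ (k - j)) s1 s2
        (fun a => pow_nonneg (xo_pos a).le j) (fun a => pow_nonneg (xo_pos a).le (k - j))
    exact HasSum.mul (f := fun a => xo a ^ j) (g := fun a => xo a ^ (k - j)) s1.hasSum s2.hasSum s3
  have hfun : (fun p : ℕ × ℕ => ∑ j ∈ Finset.Icc 2 (k - 2), xo p.1 ^ j * xo p.2 ^ (k - j))
      = fun p : ℕ × ℕ => (if p.1 = p.2 then ((k : ℝ) - 3) * xo p.1 ^ k else 0)
        + (xo p.1 ^ (k - 2) * Gk p.1 p.2 + xo p.2 ^ (k - 2) * Gk p.2 p.1) :=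
    funext fun p => geom_id k hk p.1 p.2
  rw [hfun] at hL
  have hEq := hL.unique hR
  have hz := (zetaEO_eq k hk).trans (hasSum_E k hk).tsum_eq
  rw [hz]
  simp only [MTV_single]
  have e2 : ∑ j ∈ Finset.Icc 2 (k - 2), (2 * ∑' a, xo a ^ j) * (2 * ∑' a, xo a ^ (k - j))
      = 4 * ∑ j ∈ Finset.Icc 2 (k - 2), (∑' a, xo a ^ j) * ∑' a, xo a ^ (k - j) := by
    rw [Finset.mul_sum]
    apply Finset.sum_congr rfl
    intro j _
    ring
  rw [e2, hEq]
  ring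
end
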